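/- arXiv:2406.06926 — 3 statements merged into one kernel-verified Lean document; each statement's English description precedes it below -/
import Mathlib

section
/- Let d ≥ 2, 0 < s ≤ 1, 1 ≤ p, q < ∞, 0 < α < d, and assume 𝒟 = p(d+α) − 2q(d−sp) > 0. Then there exists a constant C > 0 such that for all ε > 0 small enough with p(d+α−2ε) − 2q(d−sp) > 0, setting γ_ε = q + (q(sp−1)+p)(d−α+2ε)/(sp(d+α−2ε−2) + (d−α+2ε)) and a_ε = p(γ_ε(d+α−2ε) − 2qd)/(γ_ε(p(d+α−2ε) − 2q(d−sp))), for every radial g ∈ C¹_{c,rad}(ℝ^d): ‖g‖_{L^{γ_ε}(ℝ^d)} ≤ C ‖g‖_{Ẇ^{s,p}(ℝ^d)}^{a_ε} ‖ |x|^{−((d−α)/(2q) + ε/q)} g ‖_{L^q(ℝ^d)}^{1−a_ε}. -/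
open MeasureTheory Real

/-- Homogeneous (fractional) Sobolev seminorm `‖g‖_{Ẇ^{s,p}(ℝ^d)}`:
for `0 < s < 1` the Gagliardo seminorm, for `s = 1` the `L^p` norm of the gradient. -/
noncomputable def sobolevSemi (d : ℕ) (s p : ℝ) (g : EuclideanSpace ℝ (Fin d) → ℝ) : ℝ :=
  if s = 1 then (∫ x, ‖fderiv ℝ g x‖ ^ p) ^ (1 / p)
  else if s = 0 then (∫ x, |g x| ^ p) ^ (1 / p)
  else (∫ x, ∫ y, |g x - g y| ^ p / ‖x - y‖ ^ ((d : ℝ) + s * p)) ^ (1 / p)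

theorem rpow_le_of_forall_le_add {G A B q σ : ℝ} (hG : 0 ≤ G) (hA : 0 ≤ A) (hB : 0 ≤ B)
    (hq : 0 < q) (hσ : 0 ≤ σ)
    (h : ∀ ρ : ℝ, 0 < ρ → G ≤ A * ρ ^ (-1 / q) + B * ρ ^ σ) :
    G ^ (1 + q * σ) ≤ 2 * (2 * A) ^ (q * σ) * B := by
  have hqσ : 0 ≤ q * σ := by positivity
  have key : ∀ A' : ℝ, 0 < A' → A ≤ A' → G ^ (1 + q * σ) ≤ 2 * (2 * A') ^ (q * σ) * B := by
    intro A' hA' hAA'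
    rcases hG.eq_or_lt with rfl | hG
    · rw [Real.zero_rpow (by positivity)]; positivity
    have hρ : 0 < (2 * A' / G) ^ q := by positivity
    have h1 := h _ hρ
    rw [← Real.rpow_mul (by positivity), ← Real.rpow_mul (by positivity),
      mul_div_cancel₀ _ hq.ne', Real.rpow_neg_one] at h1
    have h2 : A * (2 * A' / G)⁻¹ ≤ G / 2 := by
      rw [inv_div, mul_div_assoc', div_le_div_iff₀ (by positivity) (by positivity)]
      nlinarith [mul_le_mul_of_nonneg_right hAA' hG.le]
    have h3 : G ≤ 2 * (B * (2 * A' / G) ^ (q * σ)) := by linarith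
    rw [Real.div_rpow (by positivity) hG.le] at h3
    rw [Real.rpow_add hG, Real.rpow_one]
    calc G * G ^ (q * σ) ≤ (2 * (B * ((2 * A') ^ (q * σ) / G ^ (q * σ)))) * G ^ (q * σ) := by gcongr
      _ = 2 * (2 * A') ^ (q * σ) * B := by
        have : G ^ (q * σ) ≠ 0 := by positivity
        field_simp
  have hc : ContinuousAt (fun A' : ℝ => 2 * (2 * A') ^ (q * σ) * B) A := by
    have : Continuous (fun A' : ℝ => 2 * (2 * A') ^ (q * σ) * B) :=
      (continuous_const.mul ((continuous_const.mul continuous_id).rpow_const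
        fun _ => Or.inr hqσ)).mul continuous_const
    exact this.continuousAt
  refine ge_of_tendsto (hc.mono_left (nhdsWithin_le_nhds (s := Set.Ioi A))) ?_
  filter_upwards [self_mem_nhdsWithin] with A' hA'
  exact key A' (hA.trans_lt hA') (le_of_lt hA')

theorem lintegral_le_rpow_lintegral_rpow {α : Type*} [MeasurableSpace α] (ν : Measure α)
    [IsProbabilityMeasure ν] {f : α → ℝ} (hf : AEStronglyMeasurable f ν) {p : ℝ} (hp : 1 ≤ p) :
    ∫⁻ y, ENNReal.ofReal |f y| ∂ν ≤ (∫⁻ y, ENNReal.ofReal (|f y| ^ p) ∂ν) ^ (1 / p) := by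
  have h := eLpNorm'_le_eLpNorm'_of_exponent_le one_pos hp ν hf
  simp only [eLpNorm', ENNReal.rpow_one, div_one] at h
  simpa only [Real.enorm_eq_ofReal_abs,
    ENNReal.ofReal_rpow_of_nonneg (abs_nonneg _) (zero_le_one.trans hp)] using h

theorem abs_le_rpow_add_rpow {α : Type*} [MeasurableSpace α] (ν : Measure α)
    [IsProbabilityMeasure ν] {f : α → ℝ} (hf : AEStronglyMeasurable f ν) {c a b p q : ℝ}
    (hp : 1 ≤ p) (hq : 1 ≤ q) (ha0 : 0 ≤ a) (hb0 : 0 ≤ b)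
    (ha : ∫⁻ y, ENNReal.ofReal (|f y| ^ q) ∂ν ≤ ENNReal.ofReal a)
    (hb : ∫⁻ y, ENNReal.ofReal (|c - f y| ^ p) ∂ν ≤ ENNReal.ofReal b) :
    |c| ≤ a ^ (1 / q) + b ^ (1 / p) := by
  have h1 : ENNReal.ofReal |c| ≤
      ∫⁻ y, ENNReal.ofReal |f y| ∂ν + ∫⁻ y, ENNReal.ofReal |c - f y| ∂ν := by
    rw [← lintegral_add_left' (by fun_prop)]
    calc ENNReal.ofReal |c| = ∫⁻ _, ENNReal.ofReal |c| ∂ν := by simp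
      _ ≤ _ := by
        refine lintegral_mono fun y => ?_
        rw [← ENNReal.ofReal_add (abs_nonneg _) (abs_nonneg _)]
        refine ENNReal.ofReal_le_ofReal ?_
        calc |c| = |f y + (c - f y)| := by ring_nf
          _ ≤ _ := abs_add_le _ _
  have h2 := lintegral_le_rpow_lintegral_rpow ν hf hq
  have h3 := lintegral_le_rpow_lintegral_rpow ν (f := fun y => c - f y)
    (aestronglyMeasurable_const.sub hf) hp
  have hq' : (0 : ℝ) ≤ 1 / q := by positivity
  have hp' : (0 : ℝ) ≤ 1 / p := by positivity
  have h4 := ENNReal.rpow_le_rpow ha hq'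
  have h5 := ENNReal.rpow_le_rpow hb hp'
  rw [ENNReal.ofReal_rpow_of_nonneg ha0 hq'] at h4
  rw [ENNReal.ofReal_rpow_of_nonneg hb0 hp'] at h5
  have h6 := h1.trans (add_le_add (h2.trans h4) (h3.trans h5))
  rw [← ENNReal.ofReal_add (by positivity) (by positivity)] at h6
  exact (ENNReal.ofReal_le_ofReal_iff (by positivity)).1 h6

/-- Ball integrals of radial functions decay like the proportion of the sphere seen by the ball. -/
theorem lintegral_ball_le_of_radial {d : ℕ} (hd : 0 < d)
    {h : EuclideanSpace ℝ (Fin d) → ENNReal} (hh : Measurable h)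
    (hrad : ∀ x y, ‖x‖ = ‖y‖ → h x = h y)
    {x : EuclideanSpace ℝ (Fin d)} (hx : x ≠ 0) {ρ : ℝ} (hρ : 0 < ρ) :
    ∫⁻ y in Metric.ball x ρ, h y ≤
      ENNReal.ofReal (2 ^ d * (ρ / ‖x‖) ^ (d - 1)) * ∫⁻ y, h y := by
  have : Nonempty (Fin d) := ⟨⟨0, hd⟩⟩
  have hr : 0 < ‖x‖ := norm_pos_iff.2 hx
  set r := ‖x‖ with hrdef
  set F := ∫⁻ y in Metric.ball x ρ, h y with hF
  set ω := volume (Metric.ball (0 : EuclideanSpace ℝ (Fin d)) 1) with hω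
  have hω0 : ω ≠ 0 := (Metric.measure_ball_pos volume _ one_pos).ne'
  have hωt : ω ≠ ⊤ := measure_ball_lt_top.ne
  set A := Metric.ball (0 : EuclideanSpace ℝ (Fin d)) (r + ρ) \ Metric.ball 0 r with hA
  have hAmeas : MeasurableSet A := measurableSet_ball.diff measurableSet_ball
  have hvolA : ENNReal.ofReal (r ^ (d - 1) * ρ) * ω ≤ volume A := by
    rw [hA, measure_sdiff (Metric.ball_subset_ball (by linarith))
      measurableSet_ball.nullMeasurableSet measure_ball_lt_top.ne,
      Measure.addHaar_ball _ _ (by positivity), Measure.addHaar_ball _ _ hr.le,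
      ← ENNReal.sub_mul (fun _ _ => hωt), ← ENNReal.ofReal_sub _ (by positivity)]
    gcongr
    simp only [finrank_euclideanSpace, Fintype.card_fin]
    obtain ⟨n, rfl⟩ : ∃ n, d = n + 1 := ⟨d - 1, by omega⟩
    simp only [Nat.add_sub_cancel, pow_succ]
    have : r ^ n ≤ (r + ρ) ^ n := by gcongr; linarith
    nlinarith [mul_le_mul_of_nonneg_right this (by positivity : 0 ≤ r + ρ)]
  have hpt : ∀ z ∈ A, F ≤ ∫⁻ y in Metric.ball z (2 * ρ), h y := by
    intro z hz
    have hz1 : r ≤ ‖z‖ := by simpa using hz.2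
    have hz2 : ‖z‖ < r + ρ := by simpa using hz.1
    have hz0 : 0 < ‖z‖ := hr.trans_le hz1
    set x' := (r / ‖z‖) • z with hx'
    have hnx' : ‖x‖ = ‖x'‖ := by
      rw [hx', norm_smul, Real.norm_of_nonneg (by positivity), div_mul_cancel₀ _ hz0.ne']
    set T := (Submodule.span ℝ {x - x'})ᗮ.reflection with hT
    have hTx : T x = x' := Submodule.reflection_sub hnx'
    have hdist : dist x' z < ρ := by
      rw [dist_eq_norm, hx']
      have : (r / ‖z‖) • z - z = (r / ‖z‖ - 1) • z := by module
      rw [this, norm_smul, Real.norm_of_nonpos (by rw [sub_nonpos, div_le_one hz0]; exact hz1)]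
      have : -(r / ‖z‖ - 1) * ‖z‖ = ‖z‖ - r := by field_simp; ring
      linarith
    have hpre : T ⁻¹' (Metric.ball x' ρ) = Metric.ball x ρ := by
      ext y
      simp only [Set.mem_preimage, Metric.mem_ball]
      rw [← hTx, T.dist_map]
    have h1 := T.measurePreserving.setLIntegral_comp_preimage_emb
      T.toHomeomorph.measurableEmbedding h (Metric.ball x' ρ)
    rw [hpre] at h1
    calc F = ∫⁻ y in Metric.ball x ρ, h (T y) := by
          rw [hF]; congr 1; ext y; exact hrad _ _ (T.norm_map y).symm
      _ = ∫⁻ y in Metric.ball x' ρ, h y := h1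
      _ ≤ _ := lintegral_mono_set (Metric.ball_subset_ball' (by linarith))
  have hsub : ∫⁻ z, ∫⁻ y in Metric.ball z (2 * ρ), h y =
      ENNReal.ofReal ((2 * ρ) ^ d) * ω * ∫⁻ y, h y := by
    have e1 : ∀ z, ∫⁻ y in Metric.ball z (2 * ρ), h y =
        ∫⁻ y, {w : EuclideanSpace ℝ (Fin d) × EuclideanSpace ℝ (Fin d) |
          dist w.2 w.1 < 2 * ρ}.indicator (fun w => h w.2) (z, y) := by
      intro z
      rw [← lintegral_indicator measurableSet_ball]
      rfl
    have hms : MeasurableSet {w : EuclideanSpace ℝ (Fin d) × EuclideanSpace ℝ (Fin d) |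
          dist w.2 w.1 < 2 * ρ} := measurableSet_lt (by fun_prop) (by fun_prop)
    simp_rw [e1]
    rw [lintegral_lintegral_swap]
    · rw [← lintegral_const_mul _ hh]
      congr 1
      ext y
      have e2 : ∀ z, {w : EuclideanSpace ℝ (Fin d) × EuclideanSpace ℝ (Fin d) |
          dist w.2 w.1 < 2 * ρ}.indicator (fun w => h w.2) (z, y) =
          (Metric.ball y (2 * ρ)).indicator (fun _ => h y) z := by
        intro z
        simp only [Set.indicator, Set.mem_ofPred_eq, Metric.mem_ball, dist_comm]
      simp_rw [e2]
      rw [lintegral_indicator measurableSet_ball, setLIntegral_const,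
        Measure.addHaar_ball _ _ (by positivity), mul_comm, finrank_euclideanSpace,
        Fintype.card_fin]
    · exact ((hh.comp measurable_snd).indicator hms).aemeasurable
  have hmain : F * (ENNReal.ofReal (r ^ (d - 1) * ρ) * ω) ≤
      ENNReal.ofReal ((2 * ρ) ^ d) * ω * ∫⁻ y, h y := by
    calc _ ≤ F * volume A := by gcongr
      _ = ∫⁻ _ in A, F := by rw [setLIntegral_const]
      _ ≤ ∫⁻ z in A, ∫⁻ y in Metric.ball z (2 * ρ), h y := setLIntegral_mono' hAmeas hpt
      _ ≤ ∫⁻ z, ∫⁻ y in Metric.ball z (2 * ρ), h y := setLIntegral_le_lintegral _ _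
      _ = _ := hsub
  have hpos : 0 < r ^ (d - 1) * ρ := by positivity
  have e3 : (2 * ρ) ^ d = (2 ^ d * (ρ / r) ^ (d - 1)) * (r ^ (d - 1) * ρ) := by
    obtain ⟨n, rfl⟩ : ∃ n, d = n + 1 := ⟨d - 1, by omega⟩
    simp only [Nat.add_sub_cancel, div_pow, mul_pow]
    field_simp
    try ring
  rw [e3, ENNReal.ofReal_mul (by positivity : 0 ≤ 2 ^ d * (ρ / r) ^ (d - 1))] at hmain
  have hne0 : ENNReal.ofReal (r ^ (d - 1) * ρ) * ω ≠ 0 := by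
    simp [hω0, hpos]
  have hnet : ENNReal.ofReal (r ^ (d - 1) * ρ) * ω ≠ ⊤ := ENNReal.mul_ne_top ENNReal.ofReal_ne_top hωt
  refine (ENNReal.mul_le_mul_iff_left hne0 hnet).1 (hmain.trans (le_of_eq ?_))
  ring

theorem lintegral_ball_le_weighted {d : ℕ} (hd : 0 < d) {f : EuclideanSpace ℝ (Fin d) → ℝ}
    (hf : Measurable f) (hf0 : ∀ x, 0 ≤ f x) (hrad : ∀ x y, ‖x‖ = ‖y‖ → f x = f y)
    {β : ℝ} (hβ0 : 0 ≤ β) (hβ1 : β ≤ (d : ℝ) - 1)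
    {x : EuclideanSpace ℝ (Fin d)} (hx : x ≠ 0) {ρ : ℝ} (hρ : 0 < ρ) :
    ∫⁻ y in Metric.ball x ρ, ENNReal.ofReal (f y) ≤
      ENNReal.ofReal (4 ^ d * ρ ^ ((d : ℝ) - 1) * ‖x‖ ^ (-((d : ℝ) - 1 - β))) *
        ∫⁻ y, ENNReal.ofReal (‖y‖ ^ (-β) * f y) := by
  have hr : 0 < ‖x‖ := norm_pos_iff.2 hx
  have hd1 : 1 ≤ d := hd
  have : Nonempty (Fin d) := ⟨⟨0, hd⟩⟩
  set M := max ‖x‖ ρ with hM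
  have hM0 : 0 < M := hr.trans_le (le_max_left _ _)
  have hne : ∀ᵐ y : EuclideanSpace ℝ (Fin d), y ≠ 0 :=
    compl_mem_ae_iff.2 (measure_singleton (0 : EuclideanSpace ℝ (Fin d)))
  have h1 : ∫⁻ y in Metric.ball x ρ, ENNReal.ofReal (f y) ≤
      ENNReal.ofReal ((2 * M) ^ β) *
        ∫⁻ y in Metric.ball x ρ, ENNReal.ofReal (‖y‖ ^ (-β) * f y) := by
    rw [← lintegral_const_mul' _ _ ENNReal.ofReal_ne_top]
    refine lintegral_mono_ae ?_
    filter_upwards [ae_restrict_mem measurableSet_ball, ae_restrict_of_ae hne] with y hy hy0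
    rw [← ENNReal.ofReal_mul (by positivity)]
    refine ENNReal.ofReal_le_ofReal ?_
    have hy1 : 0 < ‖y‖ := norm_pos_iff.2 hy0
    have hy2 : ‖y‖ ≤ 2 * M := by
      have : ‖y‖ ≤ ‖x‖ + ‖y - x‖ := by simpa using norm_add_le x (y - x)
      rw [Metric.mem_ball, dist_eq_norm] at hy
      have := le_max_left ‖x‖ ρ
      have := le_max_right ‖x‖ ρ
      linarith
    calc f y = ‖y‖ ^ β * (‖y‖ ^ (-β) * f y) := by
          rw [← mul_assoc, ← Real.rpow_add hy1]; simp
      _ ≤ _ := by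
          have := hf0 y
          gcongr
  have h2β : (2 : ℝ) ^ β ≤ 2 ^ d := by
    rw [← Real.rpow_natCast]
    exact Real.rpow_le_rpow_of_exponent_le one_le_two (by linarith)
  have h4 : (4 : ℝ) ^ d = 2 ^ d * 2 ^ d := by rw [← mul_pow]; norm_num
  rcases le_total ρ ‖x‖ with hρr | hρr
  · have hMr : M = ‖x‖ := max_eq_left hρr
    have h3 := lintegral_ball_le_of_radial hd (h := fun y => ENNReal.ofReal (‖y‖ ^ (-β) * f y))
      (by fun_prop) (fun y z hyz => by simp only [hyz, hrad y z hyz]) hx hρ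
    refine h1.trans ((mul_le_mul_right h3 _).trans ?_)
    rw [← mul_assoc, ← ENNReal.ofReal_mul (by positivity)]
    refine mul_le_mul_left (ENNReal.ofReal_le_ofReal ?_) _
    rw [hMr, Real.mul_rpow (by norm_num) hr.le, ← Real.rpow_natCast (ρ / ‖x‖), Nat.cast_sub hd1,
      Nat.cast_one, Real.div_rpow hρ.le hr.le, h4]
    have e : ‖x‖ ^ (-((d : ℝ) - 1 - β)) = ‖x‖ ^ β / ‖x‖ ^ ((d : ℝ) - 1) := by
      rw [← Real.rpow_sub hr]; ring_nf
    rw [e]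
    calc 2 ^ β * ‖x‖ ^ β * (2 ^ d * (ρ ^ ((d : ℝ) - 1) / ‖x‖ ^ ((d : ℝ) - 1)))
        ≤ 2 ^ d * ‖x‖ ^ β * (2 ^ d * (ρ ^ ((d : ℝ) - 1) / ‖x‖ ^ ((d : ℝ) - 1))) := by gcongr
      _ = _ := by ring
  · have hMr : M = ρ := max_eq_right hρr
    refine h1.trans ?_
    refine mul_le_mul' (ENNReal.ofReal_le_ofReal ?_) (setLIntegral_le_lintegral _ _)
    rw [hMr, Real.mul_rpow (by norm_num) hρ.le]
    have e : ρ ^ β = ρ ^ ((d : ℝ) - 1) * ρ ^ (-((d : ℝ) - 1 - β)) := by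
      rw [← Real.rpow_add hρ]; ring_nf
    have h5 : ρ ^ (-((d : ℝ) - 1 - β)) ≤ ‖x‖ ^ (-((d : ℝ) - 1 - β)) :=
      Real.rpow_le_rpow_of_nonpos hr hρr (by linarith)
    have h6 : (2 : ℝ) ^ d ≤ 4 ^ d := by gcongr; norm_num
    rw [e, ← mul_assoc]
    have := h2β.trans h6
    gcongr

theorem radial_rpow_le_gagliardo {d : ℕ} (hd : 0 < d) {g : EuclideanSpace ℝ (Fin d) → ℝ}
    (hg : Continuous g) (hrad : ∀ x y, ‖x‖ = ‖y‖ → g x = g y)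
    {s p q β : ℝ} (hs : 0 < s) (hp : 1 ≤ p) (hq : 1 ≤ q)
    (hβ0 : 0 ≤ β) (hβ1 : β ≤ (d : ℝ) - 1) {W D ω : ℝ} (hW0 : 0 ≤ W) (hD0 : 0 ≤ D)
    (hω : ω = volume.real (Metric.ball (0 : EuclideanSpace ℝ (Fin d)) 1))
    (hW : ∫⁻ y, ENNReal.ofReal (‖y‖ ^ (-β) * |g y| ^ q) ≤ ENNReal.ofReal W)
    {x : EuclideanSpace ℝ (Fin d)} (hx : x ≠ 0)
    (hD : ∫⁻ y, ENNReal.ofReal (|g x - g y| ^ p / ‖x - y‖ ^ ((d : ℝ) + s * p)) ≤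
      ENNReal.ofReal D) :
    |g x| ^ (p * (1 + q * s)) * ‖x‖ ^ (((d : ℝ) - 1 - β) * (s * p)) ≤
      (2 ^ p * 2 ^ (q * s * p) * (4 ^ d / ω) ^ (s * p) / ω) * W ^ (s * p) * D := by
  have : Nonempty (Fin d) := ⟨⟨0, hd⟩⟩
  have hr : 0 < ‖x‖ := norm_pos_iff.2 hx
  have hp0 : 0 < p := by linarith
  have hq0 : 0 < q := by linarith
  have hω0 : 0 < ω := by
    rw [hω]
    exact ENNReal.toReal_pos (Metric.measure_ball_pos _ _ one_pos).ne' measure_ball_lt_top.ne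
  have hωe : volume (Metric.ball (0 : EuclideanSpace ℝ (Fin d)) 1) = ENNReal.ofReal ω := by
    rw [hω, ofReal_measureReal measure_ball_lt_top.ne]
  set r := ‖x‖ with hrdef
  set κ := (d : ℝ) - 1 - β with hκ
  set A := ((4 ^ d / ω) * r ^ (-κ) * W) ^ (1 / q) with hA
  set B := (D / ω) ^ (1 / p) with hB
  have hpt : ∀ ρ : ℝ, 0 < ρ → |g x| ≤ A * ρ ^ (-1 / q) + B * ρ ^ s := by
    intro ρ hρ
    have hvol : volume (Metric.ball x ρ) = ENNReal.ofReal (ρ ^ d * ω) := by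
      rw [Measure.addHaar_ball _ _ hρ.le, hωe, ← ENNReal.ofReal_mul (by positivity),
        finrank_euclideanSpace, Fintype.card_fin]
    have hvpos : 0 < ρ ^ d * ω := by positivity
    let ν : Measure (EuclideanSpace ℝ (Fin d)) :=
      (volume (Metric.ball x ρ))⁻¹ • volume.restrict (Metric.ball x ρ)
    have hν : ∀ f : EuclideanSpace ℝ (Fin d) → ENNReal, ∫⁻ y, f y ∂ν =
        ENNReal.ofReal (ρ ^ d * ω)⁻¹ * ∫⁻ y in Metric.ball x ρ, f y := by
      intro f
      rw [lintegral_smul_measure, hvol, ← ENNReal.ofReal_inv_of_pos hvpos, smul_eq_mul]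
    have : IsProbabilityMeasure ν := ⟨by
      simp only [ν, Measure.smul_apply, Measure.restrict_apply_univ, smul_eq_mul]
      exact ENNReal.inv_mul_cancel (Metric.measure_ball_pos _ _ hρ).ne' measure_ball_lt_top.ne⟩
    have hρd : ρ ^ d = ρ ^ ((d : ℝ) - 1) * ρ := by
      rw [← Real.rpow_add_one hρ.ne', sub_add_cancel, Real.rpow_natCast]
    have h1 : ∫⁻ y, ENNReal.ofReal (|g y| ^ q) ∂ν ≤
        ENNReal.ofReal ((4 ^ d / ω) * r ^ (-κ) * W * ρ⁻¹) := by
      rw [hν]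
      have := lintegral_ball_le_weighted hd (f := fun y => |g y| ^ q)
        (by have := hg.measurable; fun_prop) (fun y => by positivity)
        (fun y z hyz => by simp only [hrad y z hyz]) hβ0 hβ1 hx hρ
      refine (mul_le_mul_right (this.trans (mul_le_mul_right hW _)) _).trans (le_of_eq ?_)
      rw [← ENNReal.ofReal_mul (by positivity), ← ENNReal.ofReal_mul (by positivity)]
      congr 1
      rw [hρd]
      have : ρ ^ ((d : ℝ) - 1) ≠ 0 := by positivity
      field_simp
      rw [mul_comm]
    have h2 : ∫⁻ y, ENNReal.ofReal (|g x - g y| ^ p) ∂ν ≤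
        ENNReal.ofReal (D / ω * ρ ^ (s * p)) := by
      rw [hν]
      have : ∫⁻ y in Metric.ball x ρ, ENNReal.ofReal (|g x - g y| ^ p) ≤
          ENNReal.ofReal (ρ ^ ((d : ℝ) + s * p)) * ENNReal.ofReal D := by
        refine le_trans ?_ (mul_le_mul_right ((setLIntegral_le_lintegral (Metric.ball x ρ) _).trans
          hD) _)
        rw [← lintegral_const_mul' _ _ ENNReal.ofReal_ne_top]
        refine setLIntegral_mono' measurableSet_ball fun y hy => ?_
        rw [← ENNReal.ofReal_mul (by positivity)]
        refine ENNReal.ofReal_le_ofReal ?_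
        rcases eq_or_ne x y with rfl | hxy
        · simp [Real.zero_rpow hp0.ne']
        have hxy' : 0 < ‖x - y‖ := norm_pos_iff.2 (sub_ne_zero.2 hxy)
        rw [Metric.mem_ball, dist_comm, dist_eq_norm] at hy
        rw [mul_div_assoc', le_div_iff₀ (by positivity), mul_comm]
        gcongr
      refine (mul_le_mul_right this _).trans (le_of_eq ?_)
      rw [← ENNReal.ofReal_mul (by positivity), ← ENNReal.ofReal_mul (by positivity)]
      congr 1
      rw [Real.rpow_add hρ, Real.rpow_natCast]
      field_simp
    have h3 := abs_le_rpow_add_rpow ν hg.aestronglyMeasurable hp hq (by positivity) (by positivity)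
      h1 h2
    rw [Real.mul_rpow (by positivity) (inv_nonneg.2 hρ.le),
      Real.mul_rpow (x := D / ω) (by positivity) (by positivity),
      Real.inv_rpow hρ.le, ← Real.rpow_neg hρ.le, ← Real.rpow_mul hρ.le] at h3
    have e1 : s * p * (1 / p) = s := by field_simp
    rw [e1, ← neg_div] at h3
    exact h3
  have h4 := rpow_le_of_forall_le_add (abs_nonneg (g x)) (by positivity) (by positivity) hq0 hs.le
    hpt
  have h5 := Real.rpow_le_rpow (by positivity) h4 hp0.le
  rw [← Real.rpow_mul (abs_nonneg _), Real.mul_rpow (by positivity) (by positivity),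
    Real.mul_rpow (by positivity) (by positivity), ← Real.rpow_mul (by positivity),
    Real.mul_rpow (by positivity) (by positivity), hA, hB, ← Real.rpow_mul (by positivity),
    ← Real.rpow_mul (by positivity), one_div_mul_cancel hp0.ne', Real.rpow_one,
    show 1 / q * (q * s * p) = s * p by field_simp, Real.mul_rpow (by positivity) hW0,
    Real.mul_rpow (by positivity) (by positivity), ← Real.rpow_mul hr.le,
    mul_comm (1 + q * s) p] at h5
  calc _ ≤ _ := mul_le_mul_of_nonneg_right h5 (by positivity : 0 ≤ r ^ (κ * (s * p)))
    _ = (2 ^ p * 2 ^ (q * s * p) * (4 ^ d / ω) ^ (s * p) / ω) * W ^ (s * p) * D *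
        (r ^ (-κ * (s * p)) * r ^ (κ * (s * p))) := by ring
    _ = _ := by rw [← Real.rpow_add hr]; simp

theorem integrable_min_norm_rpow_div {d : ℕ} (hd : 0 < d) {s p : ℝ} (hs0 : 0 < s) (hs1 : s < 1)
    (hp : 0 < p) :
    Integrable fun x : EuclideanSpace ℝ (Fin d) =>
      (min ‖x‖ 1) ^ p / ‖x‖ ^ ((d : ℝ) + s * p) := by
  have : Nonempty (Fin d) := ⟨⟨0, hd⟩⟩
  have hsp : s * p < p := by nlinarith
  have hsp0 : 0 < s * p := by positivity
  refine (integrable_fun_norm_addHaar volume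
    (f := fun t : ℝ => (min t 1) ^ p / t ^ ((d : ℝ) + s * p))).2 ?_
  simp only [finrank_euclideanSpace, Fintype.card_fin, smul_eq_mul]
  rw [← Set.Ioc_union_Ioi_eq_Ioi (zero_le_one (α := ℝ)), integrableOn_union]
  have hcast : ((d - 1 : ℕ) : ℝ) = (d : ℝ) - 1 := by
    rw [Nat.cast_sub (by omega : 1 ≤ d)]; simp
  constructor
  · have h1 : IntegrableOn (fun t : ℝ => t ^ (p - s * p - 1)) (Set.Ioc 0 1) :=
      (intervalIntegrable_iff_integrableOn_Ioc_of_le zero_le_one).1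
        (intervalIntegral.intervalIntegrable_rpow' (by linarith))
    refine h1.congr_fun (fun t ht => ?_) measurableSet_Ioc
    have ht0 : 0 < t := ht.1
    simp only
    rw [min_eq_left ht.2, ← Real.rpow_natCast, hcast, ← Real.rpow_sub ht0, ← Real.rpow_add ht0]
    ring_nf
  · have h1 : IntegrableOn (fun t : ℝ => t ^ (-1 - s * p)) (Set.Ioi 1) :=
      integrableOn_Ioi_rpow_of_lt (by linarith) one_pos
    refine h1.congr_fun (fun t ht => ?_) measurableSet_Ioi
    have ht0 : 0 < t := one_pos.trans ht
    simp only
    rw [min_eq_right (le_of_lt ht), Real.one_rpow, ← Real.rpow_natCast, hcast, one_div,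
      ← Real.rpow_neg ht0.le, ← Real.rpow_add ht0]
    ring_nf

theorem integrable_gagliardo {d : ℕ} (hd : 0 < d) {s p : ℝ} (hs0 : 0 < s) (hs1 : s < 1)
    (hp : 0 < p) {g : EuclideanSpace ℝ (Fin d) → ℝ} (hg : ContDiff ℝ 1 g)
    (hgc : HasCompactSupport g) :
    Integrable (fun z : EuclideanSpace ℝ (Fin d) × EuclideanSpace ℝ (Fin d) =>
      |g z.1 - g z.2| ^ p / ‖z.1 - z.2‖ ^ ((d : ℝ) + s * p)) (volume.prod volume) := by
  obtain ⟨K, hK⟩ := hg.lipschitzWith_of_hasCompactSupport hgc one_ne_zero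
  obtain ⟨M, hM⟩ := hgc.exists_bound_of_continuous hg.continuous
  have hM0 : 0 ≤ M := (norm_nonneg _).trans (hM 0)
  set c : ℝ := max K (2 * M) with hc
  have hc0 : 0 ≤ c := le_max_of_le_right (by linarith)
  set k : EuclideanSpace ℝ (Fin d) → ℝ := fun x =>
    c ^ p * ((min ‖x‖ 1) ^ p / ‖x‖ ^ ((d : ℝ) + s * p)) with hk
  have hkint : Integrable k := (integrable_min_norm_rpow_div hd hs0 hs1 hp).const_mul _
  set S := tsupport g with hS
  have hSint : Integrable (S.indicator fun _ : EuclideanSpace ℝ (Fin d) => (1 : ℝ)) :=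
    (integrable_indicator_iff (isClosed_tsupport g).measurableSet).2
      (integrableOn_const hgc.measure_lt_top.ne)
  have h2 : Integrable (fun z : EuclideanSpace ℝ (Fin d) × EuclideanSpace ℝ (Fin d) =>
      S.indicator (fun _ => (1 : ℝ)) z.2 * k (z.1 - z.2)) (volume.prod volume) :=
    hSint.convolution_integrand (ContinuousLinearMap.mul ℝ ℝ) hkint
  have h1 : Integrable (fun z : EuclideanSpace ℝ (Fin d) × EuclideanSpace ℝ (Fin d) =>
      S.indicator (fun _ => (1 : ℝ)) z.1 * k (z.1 - z.2)) (volume.prod volume) := by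
    refine h2.swap.congr (Filter.Eventually.of_forall fun z => ?_)
    simp only [Function.comp_apply, Prod.fst_swap, Prod.snd_swap, hk, norm_sub_rev]
  have hmeas := hg.continuous.measurable
  refine (h1.add h2).mono' (Measurable.aestronglyMeasurable (by fun_prop))
    (Filter.Eventually.of_forall fun z => ?_)
  obtain ⟨x, y⟩ := z
  simp only [Pi.add_apply]
  rw [Real.norm_of_nonneg (by positivity), ← add_mul]
  have hk0 : 0 ≤ k (x - y) := by simp only [hk]; positivity
  have hmin : |g x - g y| ≤ c * min ‖x - y‖ 1 := by
    rcases min_cases ‖x - y‖ 1 with ⟨h, _⟩ | ⟨h, _⟩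
    · rw [h]
      have := hK.dist_le_mul x y
      rw [Real.dist_eq, dist_eq_norm] at this
      exact this.trans (by gcongr; exact le_max_left _ _)
    · rw [h, mul_one]
      have := hM x
      have := hM y
      rw [Real.norm_eq_abs] at *
      exact (abs_sub _ _).trans ((by linarith : |g x| + |g y| ≤ 2 * M).trans (le_max_right _ _))
  have hkb : |g x - g y| ^ p / ‖x - y‖ ^ ((d : ℝ) + s * p) ≤ k (x - y) := by
    simp only [hk]
    rw [mul_div_assoc', ← Real.mul_rpow hc0 (by positivity)]
    gcongr
  by_cases hx : x ∈ S
  · rw [Set.indicator_of_mem hx]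
    have : 0 ≤ S.indicator (fun _ => (1 : ℝ)) y := Set.indicator_nonneg (fun _ _ => zero_le_one) _
    nlinarith
  by_cases hy : y ∈ S
  · rw [Set.indicator_of_mem hy]
    have : 0 ≤ S.indicator (fun _ => (1 : ℝ)) x := Set.indicator_nonneg (fun _ _ => zero_le_one) _
    nlinarith
  · rw [image_eq_zero_of_notMem_tsupport hx, image_eq_zero_of_notMem_tsupport hy,
      Set.indicator_of_notMem hx, Set.indicator_of_notMem hy]
    simp [Real.zero_rpow hp.ne']

theorem exists_radial_profile {d : ℕ} (hd : 0 < d) {g : EuclideanSpace ℝ (Fin d) → ℝ}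
    (hrad : ∀ x y, ‖x‖ = ‖y‖ → g x = g y) (hg : ContDiff ℝ 1 g) (hgc : HasCompactSupport g) :
    ∃ u : ℝ → ℝ, ContDiff ℝ 1 u ∧ HasCompactSupport u ∧ ∀ x, g x = u ‖x‖ := by
  set e : EuclideanSpace ℝ (Fin d) := EuclideanSpace.single ⟨0, hd⟩ 1 with he
  have hen : ‖e‖ = 1 := by simp [he]
  have hiso : Isometry fun t : ℝ => t • e := by
    refine Isometry.of_dist_eq fun a b => ?_
    rw [dist_eq_norm, ← sub_smul, norm_smul, hen, mul_one, ← dist_eq_norm]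
  refine ⟨fun t => g (t • e), hg.comp (by fun_prop), hgc.comp_isClosedEmbedding
    hiso.isClosedEmbedding, fun x => hrad _ _ ?_⟩
  rw [norm_smul, hen]
  simp

theorem integrable_rpow_mul_abs_rpow {u : ℝ → ℝ} (hu : Continuous u) (huc : HasCompactSupport u)
    {a q : ℝ} (ha : 0 ≤ a) (hq : 0 < q) :
    Integrable fun t : ℝ => t ^ a * |u t| ^ q := by
  refine Continuous.integrable_of_hasCompactSupport ?_ ?_
  · exact (continuous_id.rpow_const fun _ => Or.inr ha).mul
      (hu.abs.rpow_const fun _ => Or.inr hq.le)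
  · refine huc.mono fun t ht => ?_
    contrapose! ht
    simp only [Function.mem_support, not_not] at ht ⊢
    simp [ht, Real.zero_rpow hq.ne']

theorem integrable_norm_rpow_mul_profile {d : ℕ} (hd : 0 < d) {u : ℝ → ℝ} (hu : Continuous u)
    (huc : HasCompactSupport u) {β q : ℝ} (hβ : β ≤ (d : ℝ) - 1) (hq : 0 < q) :
    Integrable (fun x : EuclideanSpace ℝ (Fin d) => ‖x‖ ^ (-β) * |u ‖x‖| ^ q) ∧
    ∫ x : EuclideanSpace ℝ (Fin d), ‖x‖ ^ (-β) * |u ‖x‖| ^ q =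
      d * volume.real (Metric.ball (0 : EuclideanSpace ℝ (Fin d)) 1) *
        ∫ t in Set.Ioi 0, t ^ ((d : ℝ) - 1 - β) * |u t| ^ q := by
  have : Nonempty (Fin d) := ⟨⟨0, hd⟩⟩
  have hcast : ((d - 1 : ℕ) : ℝ) = (d : ℝ) - 1 := by
    rw [Nat.cast_sub (by omega : 1 ≤ d)]; simp
  have hEq : Set.EqOn (fun t : ℝ => t ^ ((d : ℝ) - 1 - β) * |u t| ^ q)
      (fun t => t ^ (d - 1) • (t ^ (-β) * |u t| ^ q)) (Set.Ioi 0) := by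
    intro t ht
    simp only [smul_eq_mul]
    rw [← mul_assoc, ← Real.rpow_natCast, hcast, ← Real.rpow_add ht, ← sub_eq_add_neg]
  constructor
  · refine (integrable_fun_norm_addHaar volume
      (f := fun t : ℝ => t ^ (-β) * |u t| ^ q)).2 ?_
    rw [finrank_euclideanSpace, Fintype.card_fin]
    exact ((integrable_rpow_mul_abs_rpow hu huc (by linarith) hq).integrableOn).congr_fun hEq
      measurableSet_Ioi
  · rw [integral_fun_norm_addHaar volume (f := fun t : ℝ => t ^ (-β) * |u t| ^ q),
      finrank_euclideanSpace, Fintype.card_fin, setIntegral_congr_fun measurableSet_Ioi hEq,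
      nsmul_eq_mul, smul_eq_mul, mul_assoc]

theorem integrable_norm_rpow_mul_radial {d : ℕ} (hd : 0 < d) {g : EuclideanSpace ℝ (Fin d) → ℝ}
    (hrad : ∀ x y, ‖x‖ = ‖y‖ → g x = g y) (hg : ContDiff ℝ 1 g) (hgc : HasCompactSupport g)
    {β q : ℝ} (hβ : β ≤ (d : ℝ) - 1) (hq : 0 < q) :
    Integrable fun x : EuclideanSpace ℝ (Fin d) => ‖x‖ ^ (-β) * |g x| ^ q := by
  obtain ⟨u, hu, huc, hgu⟩ := exists_radial_profile hd hrad hg hgc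
  simp_rw [hgu]
  exact (integrable_norm_rpow_mul_profile hd hu.continuous huc hβ hq).1

theorem lintegral_radial_rpow_le_gagliardo {d : ℕ} (hd : 0 < d) {s p q : ℝ} (hs0 : 0 < s)
    (hs1 : s < 1) (hp : 1 ≤ p) (hq : 1 ≤ q) :
    ∃ K : ℝ, 0 < K ∧ ∀ β : ℝ, 0 ≤ β → β ≤ (d : ℝ) - 1 →
      ∀ g : EuclideanSpace ℝ (Fin d) → ℝ, (∀ x y, ‖x‖ = ‖y‖ → g x = g y) →
        ContDiff ℝ 1 g → HasCompactSupport g →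
      ∫⁻ x, ENNReal.ofReal (|g x| ^ (p * (1 + q * s)) *
          ‖x‖ ^ (((d : ℝ) - 1 - β) * (s * p))) ≤
        ENNReal.ofReal (K * (∫ x, ‖x‖ ^ (-β) * |g x| ^ q) ^ (s * p) *
          ∫ x, ∫ y, |g x - g y| ^ p / ‖x - y‖ ^ ((d : ℝ) + s * p)) := by
  have : Nonempty (Fin d) := ⟨⟨0, hd⟩⟩
  set ω := volume.real (Metric.ball (0 : EuclideanSpace ℝ (Fin d)) 1) with hω
  have hω0 : 0 < ω :=
    ENNReal.toReal_pos (Metric.measure_ball_pos _ _ one_pos).ne' measure_ball_lt_top.ne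
  refine ⟨2 ^ p * 2 ^ (q * s * p) * (4 ^ d / ω) ^ (s * p) / ω, by positivity, ?_⟩
  intro β hβ0 hβ1 g hrad hg hgc
  set K := 2 ^ p * 2 ^ (q * s * p) * (4 ^ d / ω) ^ (s * p) / ω with hK
  have hK0 : 0 < K := by positivity
  have hwint := integrable_norm_rpow_mul_radial hd hrad hg hgc hβ1 (by linarith : 0 < q)
  set W := ∫ x, ‖x‖ ^ (-β) * |g x| ^ q with hWdef
  have hW0 : 0 ≤ W := integral_nonneg fun x => by positivity
  have hW : ∫⁻ y, ENNReal.ofReal (‖y‖ ^ (-β) * |g y| ^ q) ≤ ENNReal.ofReal W :=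
    (ofReal_integral_eq_lintegral_ofReal hwint
      (Filter.Eventually.of_forall fun x => by positivity)).ge
  have hF := integrable_gagliardo hd hs0 hs1 (by linarith : 0 < p) hg hgc
  set F := fun z : EuclideanSpace ℝ (Fin d) × EuclideanSpace ℝ (Fin d) =>
      |g z.1 - g z.2| ^ p / ‖z.1 - z.2‖ ^ ((d : ℝ) + s * p) with hFdef
  have hF0 : ∀ z, 0 ≤ F z := fun z => by simp only [hFdef]; positivity
  set D : EuclideanSpace ℝ (Fin d) → ℝ := fun x => ∫ y, F (x, y) with hD
  have hD0 : ∀ x, 0 ≤ D x := fun x => integral_nonneg fun y => hF0 _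
  have hDint : Integrable D := hF.integral_prod_left
  have hpt : ∀ᵐ x : EuclideanSpace ℝ (Fin d), ENNReal.ofReal (|g x| ^ (p * (1 + q * s)) *
          ‖x‖ ^ (((d : ℝ) - 1 - β) * (s * p))) ≤ ENNReal.ofReal (K * W ^ (s * p) * D x) := by
    have hne : ∀ᵐ y : EuclideanSpace ℝ (Fin d), y ≠ 0 :=
      compl_mem_ae_iff.2 (measure_singleton (0 : EuclideanSpace ℝ (Fin d)))
    filter_upwards [hne, hF.prod_right_ae] with x hx hxi
    refine ENNReal.ofReal_le_ofReal ?_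
    exact radial_rpow_le_gagliardo hd hg.continuous hrad hs0 hp hq hβ0 hβ1 hW0 (hD0 x) hω hW hx
      (ofReal_integral_eq_lintegral_ofReal hxi (Filter.Eventually.of_forall fun y => hF0 _)).ge
  refine (lintegral_mono_ae hpt).trans (le_of_eq ?_)
  rw [← ofReal_integral_eq_lintegral_ofReal (hDint.const_mul _)
    (Filter.Eventually.of_forall fun x => by have := hD0 x; positivity), integral_const_mul]

theorem abs_profile_le_of_deriv {u : ℝ → ℝ} (hu : ContDiff ℝ 1 u) {p q : ℝ} (hp : 1 ≤ p)
    (hq : 1 ≤ q) {r a b : ℝ} (ha : 0 ≤ a) (hb : 0 ≤ b)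
    (hua : ∫⁻ t in Set.Ioi r, ENNReal.ofReal (|u t| ^ q) ≤ ENNReal.ofReal a)
    (hub : ∫⁻ t in Set.Ioi r, ENNReal.ofReal (|deriv u t| ^ p) ≤ ENNReal.ofReal b)
    {ρ : ℝ} (hρ : 0 < ρ) :
    |u r| ≤ a ^ (1 / q) * ρ ^ (-1 / q) + b ^ (1 / p) * ρ ^ (1 - 1 / p) := by
  have hp0 : 0 < p := by linarith
  set I := Set.Ioc r (r + ρ) with hI
  have hvol : volume I = ENNReal.ofReal ρ := by rw [hI, Real.volume_Ioc]; simp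
  let ν : Measure ℝ := ENNReal.ofReal ρ⁻¹ • volume.restrict I
  have hν : ∀ f : ℝ → ENNReal, ∫⁻ y, f y ∂ν = ENNReal.ofReal ρ⁻¹ * ∫⁻ y in I, f y := by
    intro f
    rw [lintegral_smul_measure, smul_eq_mul]
  have : IsProbabilityMeasure ν := ⟨by
    simp only [ν, Measure.smul_apply, Measure.restrict_apply_univ, smul_eq_mul, hvol]
    rw [← ENNReal.ofReal_mul (by positivity), inv_mul_cancel₀ hρ.ne', ENNReal.ofReal_one]⟩
  have hν' : ∀ (f : ℝ → ENNReal) (c : ℝ), ∫⁻ t in Set.Ioi r, f t ≤ ENNReal.ofReal c →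
      ∫⁻ y, f y ∂ν ≤ ENNReal.ofReal (ρ⁻¹ * c) := by
    intro f c hc
    rw [hν, ENNReal.ofReal_mul (by positivity)]
    exact mul_le_mul_right ((lintegral_mono_set Set.Ioc_subset_Ioi_self).trans hc) _
  have hcd : Continuous (deriv u) := hu.continuous_deriv le_rfl
  have h1 := hν' _ _ hua
  have h2 := hν' _ _ hub
  have h3 : ∀ t ∈ I, |u r - u t| ≤ ρ * (ρ⁻¹ * b) ^ (1 / p) := by
    intro t ht
    have hftc : ∫ y in r..t, deriv u y = u t - u r :=
      intervalIntegral.integral_eq_sub_of_hasDerivAt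
        (fun y _ => (hu.differentiable one_ne_zero y).hasDerivAt) (hcd.intervalIntegrable _ _)
    have h4 : |u r - u t| ≤ ∫ y in I, |deriv u y| := by
      rw [abs_sub_comm, ← hftc]
      refine (intervalIntegral.norm_integral_le_integral_norm (f := deriv u) ht.1.le).trans ?_
      rw [intervalIntegral.integral_of_le ht.1.le]
      refine setIntegral_mono_set ?_ (Filter.Eventually.of_forall fun y => norm_nonneg _)
        (Set.Ioc_subset_Ioc_right ht.2).eventuallyLE
      exact (hcd.norm.integrableOn_Icc).mono_set Set.Ioc_subset_Icc_self
    have h5 : ENNReal.ofReal (∫ y in I, |deriv u y|) =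
        ENNReal.ofReal ρ * ∫⁻ y, ENNReal.ofReal |deriv u y| ∂ν := by
      rw [ofReal_integral_eq_lintegral_ofReal, hν, ← mul_assoc,
        ← ENNReal.ofReal_mul hρ.le, mul_inv_cancel₀ hρ.ne', ENNReal.ofReal_one, one_mul]
      · exact (hcd.abs.integrableOn_Icc).mono_set Set.Ioc_subset_Icc_self
      · exact Filter.Eventually.of_forall fun y => abs_nonneg _
    have h6 := lintegral_le_rpow_lintegral_rpow ν hcd.aestronglyMeasurable hp
    have h7 := ENNReal.rpow_le_rpow h2 (by positivity : 0 ≤ 1 / p)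
    rw [ENNReal.ofReal_rpow_of_nonneg (by positivity) (by positivity)] at h7
    refine h4.trans ?_
    rw [← ENNReal.ofReal_le_ofReal_iff (by positivity), h5, ENNReal.ofReal_mul hρ.le]
    exact mul_le_mul_right (h6.trans h7) _
  have h8 : ∫⁻ t, ENNReal.ofReal (|u r - u t| ^ p) ∂ν ≤
      ENNReal.ofReal ((ρ * (ρ⁻¹ * b) ^ (1 / p)) ^ p) := by
    calc _ ≤ ∫⁻ _, ENNReal.ofReal ((ρ * (ρ⁻¹ * b) ^ (1 / p)) ^ p) ∂ν := by
          refine lintegral_mono_ae ?_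
          have : ∀ᵐ t ∂ν, t ∈ I :=
            Measure.ae_smul_measure (ae_restrict_mem measurableSet_Ioc) _
          filter_upwards [this] with t ht
          have := h3 t ht
          exact ENNReal.ofReal_le_ofReal (by gcongr)
      _ = _ := by simp
  have h9 := abs_le_rpow_add_rpow ν hu.continuous.aestronglyMeasurable hp hq (by positivity)
    (by positivity) h1 h8
  refine h9.trans (le_of_eq ?_)
  rw [← Real.rpow_mul (by positivity), mul_one_div_cancel hp0.ne', Real.rpow_one,
    Real.mul_rpow (by positivity) ha, Real.mul_rpow (by positivity) hb, Real.inv_rpow hρ.le,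
    Real.inv_rpow hρ.le, ← Real.rpow_neg hρ.le, neg_div, Real.rpow_sub hρ, Real.rpow_one]
  ring

theorem abs_profile_rpow_le {u : ℝ → ℝ} (hu : ContDiff ℝ 1 u) {p q : ℝ} (hp : 1 ≤ p)
    (hq : 1 ≤ q) {r a b : ℝ} (ha : 0 ≤ a) (hb : 0 ≤ b)
    (hua : ∫⁻ t in Set.Ioi r, ENNReal.ofReal (|u t| ^ q) ≤ ENNReal.ofReal a)
    (hub : ∫⁻ t in Set.Ioi r, ENNReal.ofReal (|deriv u t| ^ p) ≤ ENNReal.ofReal b) :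
    |u r| ^ (1 + q * (1 - 1 / p)) ≤
      2 * (2 * a ^ (1 / q)) ^ (q * (1 - 1 / p)) * b ^ (1 / p) := by
  have hσ : 0 ≤ 1 - 1 / p := by
    rw [sub_nonneg, div_le_one (by linarith)]; exact hp
  exact rpow_le_of_forall_le_add (abs_nonneg (u r)) (by positivity) (by positivity)
    (by linarith) hσ fun ρ hρ => abs_profile_le_of_deriv hu hp hq ha hb hua hub hρ

theorem lintegral_Ioi_rpow_le {v : ℝ → ℝ} (hv : Continuous v) (hvc : HasCompactSupport v)
    {κ q r : ℝ} (hκ : 0 ≤ κ) (hq : 0 < q) (hr : 0 < r) :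
    ∫⁻ t in Set.Ioi r, ENNReal.ofReal (|v t| ^ q) ≤
      ENNReal.ofReal (r ^ (-κ) * ∫ t in Set.Ioi 0, t ^ κ * |v t| ^ q) := by
  have h_intg := (integrable_rpow_mul_abs_rpow hv hvc hκ hq).integrableOn (s := Set.Ioi 0)
  rw [ENNReal.ofReal_mul (by positivity), ofReal_integral_eq_lintegral_ofReal h_intg,
    ← lintegral_const_mul' _ _ ENNReal.ofReal_ne_top]
  · refine (setLIntegral_mono' measurableSet_Ioi fun t ht => ?_).trans
      (lintegral_mono_set (Set.Ioi_subset_Ioi hr.le))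
    rw [← ENNReal.ofReal_mul (by positivity)]
    refine ENNReal.ofReal_le_ofReal ?_
    have ht' : r < t := ht
    have h1 : 1 ≤ r ^ (-κ) * t ^ κ := by
      rw [Real.rpow_neg hr.le, ← div_eq_inv_mul, one_le_div (by positivity)]
      gcongr
    rw [← mul_assoc]
    exact le_mul_of_one_le_left (by positivity) h1
  · refine (ae_restrict_iff' measurableSet_Ioi).2 (Filter.Eventually.of_forall fun t ht => ?_)
    have ht' : 0 < t := ht
    simp only [Pi.zero_apply]
    positivity

theorem abs_deriv_profile_le {d : ℕ} {g : EuclideanSpace ℝ (Fin d) → ℝ} {u : ℝ → ℝ}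
    (hg : ContDiff ℝ 1 g) (hgu : ∀ x, g x = u ‖x‖) {x : EuclideanSpace ℝ (Fin d)} (hx : x ≠ 0) :
    |deriv u ‖x‖| ≤ ‖fderiv ℝ g x‖ := by
  have hr : 0 < ‖x‖ := norm_pos_iff.2 hx
  set e := ‖x‖⁻¹ • x with he
  have hen : ‖e‖ = 1 := by
    rw [he, norm_smul, norm_inv, norm_norm, inv_mul_cancel₀ hr.ne']
  have hxe : ‖x‖ • e = x := by rw [he, smul_smul, mul_inv_cancel₀ hr.ne', one_smul]
  have h1 : HasDerivAt (fun t : ℝ => t • e) e ‖x‖ := by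
    simpa using (hasDerivAt_id ‖x‖).smul_const e
  have h2 : HasFDerivAt g (fderiv ℝ g x) (‖x‖ • e) := by
    rw [hxe]
    exact (hg.differentiable one_ne_zero x).hasFDerivAt
  have h3 := h2.comp_hasDerivAt _ h1
  have h4 : u =ᶠ[nhds ‖x‖] g ∘ fun t : ℝ => t • e := by
    filter_upwards [lt_mem_nhds hr] with t ht
    rw [Function.comp_apply, hgu, norm_smul, hen, mul_one, Real.norm_of_nonneg ht.le]
  rw [(h3.congr_of_eventuallyEq h4).deriv, ← Real.norm_eq_abs]
  simpa [hen] using (fderiv ℝ g x).le_opNorm e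

theorem rpow_mul_rpow_le_of_rpow_le {G r W S c p q κ β δ : ℝ} (hG : 0 ≤ G) (hr : 0 < r)
    (hW : 0 ≤ W) (hS : 0 ≤ S) (hc : 0 < c) (hp : 1 ≤ p) (hq : 0 < q) (hκ : κ = δ - β)
    (h : G ^ (1 + q * (1 - 1 / p)) ≤
      2 * (2 * (r ^ (-κ) * (c⁻¹ * W)) ^ (1 / q)) ^ (q * (1 - 1 / p)) *
        (r ^ (-δ) * (c⁻¹ * S)) ^ (1 / p)) :
    G ^ (p * (1 + q)) * r ^ (κ * p) ≤
      2 ^ p * 2 ^ (q * (p - 1)) * (c⁻¹) ^ (p - 1) * c⁻¹ * W ^ (p - 1) * S *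
        (r ^ (-β) * G ^ q) := by
  have hp0 : 0 < p := by linarith
  have hc' : 0 ≤ c⁻¹ := by positivity
  have hX : 0 ≤ r ^ (-κ) * (c⁻¹ * W) := by positivity
  have hY : 0 ≤ r ^ (-δ) * (c⁻¹ * S) := by positivity
  have hqp : q * (1 - 1 / p) * p = q * (p - 1) := by field_simp
  have h5 := Real.rpow_le_rpow (by positivity) h hp0.le
  have eL : (G ^ (1 + q * (1 - 1 / p))) ^ p = G ^ (p + q * (p - 1)) := by
    rw [← Real.rpow_mul hG, add_mul, hqp, one_mul]
  have eR : (2 * (2 * (r ^ (-κ) * (c⁻¹ * W)) ^ (1 / q)) ^ (q * (1 - 1 / p)) *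
        (r ^ (-δ) * (c⁻¹ * S)) ^ (1 / p)) ^ p = 2 ^ p * 2 ^ (q * (p - 1)) *
      (r ^ (-κ * (p - 1)) * ((c⁻¹) ^ (p - 1) * W ^ (p - 1))) * (r ^ (-δ) * (c⁻¹ * S)) := by
    rw [Real.mul_rpow (by positivity) (by positivity),
      Real.mul_rpow (by positivity) (by positivity), ← Real.rpow_mul (by positivity), hqp,
      ← Real.rpow_mul hY, one_div_mul_cancel hp0.ne', Real.rpow_one,
      Real.mul_rpow zero_le_two (by positivity), ← Real.rpow_mul hX,
      show 1 / q * (q * (p - 1)) = p - 1 by field_simp,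
      Real.mul_rpow (by positivity) (by positivity), Real.mul_rpow hc' hW, ← Real.rpow_mul hr.le]
    ring
  rw [eL, eR] at h5
  have e1 : G ^ (p * (1 + q)) = G ^ (p + q * (p - 1)) * G ^ q := by
    rw [← Real.rpow_add_of_nonneg hG (by nlinarith) hq.le]
    ring_nf
  have e2 : r ^ (κ * p) * (r ^ (-κ * (p - 1)) * r ^ (-δ)) = r ^ (-β) := by
    rw [← Real.rpow_add hr, ← Real.rpow_add hr]
    congr 1
    rw [hκ]; ring
  calc _ = G ^ (p + q * (p - 1)) * (G ^ q * r ^ (κ * p)) := by rw [e1]; ring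
    _ ≤ _ := mul_le_mul_of_nonneg_right h5 (by positivity)
    _ = 2 ^ p * 2 ^ (q * (p - 1)) * (c⁻¹) ^ (p - 1) * c⁻¹ * W ^ (p - 1) * S *
        (r ^ (κ * p) * (r ^ (-κ * (p - 1)) * r ^ (-δ)) * G ^ q) := by ring
    _ = _ := by rw [e2]

theorem integral_Ioi_rpow_mul_deriv_profile_le {d : ℕ} (hd : 0 < d)
    {g : EuclideanSpace ℝ (Fin d) → ℝ} {u : ℝ → ℝ} (hg : ContDiff ℝ 1 g)
    (hgc : HasCompactSupport g) (hu : ContDiff ℝ 1 u) (huc : HasCompactSupport u)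
    (hgu : ∀ x, g x = u ‖x‖) {p : ℝ} (hp0 : 0 < p) :
    d * volume.real (Metric.ball (0 : EuclideanSpace ℝ (Fin d)) 1) *
      ∫ t in Set.Ioi 0, t ^ ((d : ℝ) - 1) * |deriv u t| ^ p ≤ ∫ x, ‖fderiv ℝ g x‖ ^ p := by
  have hd1 : (1 : ℝ) ≤ d := by exact_mod_cast hd
  have : Nonempty (Fin d) := ⟨⟨0, hd⟩⟩
  have hcd : Continuous (deriv u) := hu.continuous_deriv le_rfl
  have hne : ∀ᵐ y : EuclideanSpace ℝ (Fin d), y ≠ 0 :=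
    compl_mem_ae_iff.2 (measure_singleton (0 : EuclideanSpace ℝ (Fin d)))
  obtain ⟨h1, h2⟩ := integrable_norm_rpow_mul_profile hd hcd huc.deriv (β := 0) (by linarith) hp0
  simp only [neg_zero, Real.rpow_zero, one_mul, sub_zero] at h1 h2
  rw [← h2]
  refine integral_mono_ae h1 ?_ ?_
  · refine Continuous.integrable_of_hasCompactSupport
      ((hg.continuous_fderiv one_ne_zero).norm.rpow_const fun _ => Or.inr hp0.le) ?_
    refine (hgc.fderiv ℝ).mono fun t ht => ?_
    contrapose! ht
    simp only [Function.mem_support, not_not] at ht ⊢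
    simp [ht, Real.zero_rpow hp0.ne']
  · filter_upwards [hne] with x hx
    have := abs_deriv_profile_le hg hgu hx
    gcongr

theorem abs_profile_mul_rpow_le {u : ℝ → ℝ} (hu : ContDiff ℝ 1 u) (huc : HasCompactSupport u)
    {p q c W S κ β δ r : ℝ} (hp : 1 ≤ p) (hq : 1 ≤ q) (hc : 0 < c) (hW : 0 ≤ W) (hS : 0 ≤ S)
    (hκ0 : 0 ≤ κ) (hδ0 : 0 ≤ δ) (hκ : κ = δ - β) (hr : 0 < r)
    (hWJ : c * ∫ t in Set.Ioi 0, t ^ κ * |u t| ^ q ≤ W)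
    (hSJ : c * ∫ t in Set.Ioi 0, t ^ δ * |deriv u t| ^ p ≤ S) :
    |u r| ^ (p * (1 + q)) * r ^ (κ * p) ≤
      2 ^ p * 2 ^ (q * (p - 1)) * (c⁻¹) ^ (p - 1) * c⁻¹ * W ^ (p - 1) * S *
        (r ^ (-β) * |u r| ^ q) := by
  have h1 := lintegral_Ioi_rpow_le hu.continuous huc hκ0 (by linarith : 0 < q) hr
  have h2 := lintegral_Ioi_rpow_le (hu.continuous_deriv le_rfl) huc.deriv hδ0
    (by linarith : 0 < p) hr
  rw [← le_inv_mul_iff₀ hc] at hWJ hSJ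
  have h3 := h1.trans (ENNReal.ofReal_le_ofReal
    (mul_le_mul_of_nonneg_left hWJ (Real.rpow_nonneg hr.le _)))
  have h4 := h2.trans (ENNReal.ofReal_le_ofReal
    (mul_le_mul_of_nonneg_left hSJ (Real.rpow_nonneg hr.le _)))
  exact rpow_mul_rpow_le_of_rpow_le (abs_nonneg _) hr hW hS hc hp (by linarith) hκ
    (abs_profile_rpow_le hu hp hq (by positivity) (by positivity) h3 h4)

theorem lintegral_radial_rpow_le_gradient {d : ℕ} (hd : 0 < d) {p q : ℝ} (hp : 1 ≤ p)
    (hq : 1 ≤ q) :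
    ∃ K : ℝ, 0 < K ∧ ∀ β : ℝ, 0 ≤ β → β ≤ (d : ℝ) - 1 →
      ∀ g : EuclideanSpace ℝ (Fin d) → ℝ, (∀ x y, ‖x‖ = ‖y‖ → g x = g y) →
        ContDiff ℝ 1 g → HasCompactSupport g →
      ∫⁻ x, ENNReal.ofReal (|g x| ^ (p * (1 + q)) * ‖x‖ ^ (((d : ℝ) - 1 - β) * p)) ≤
        ENNReal.ofReal (K * (∫ x, ‖x‖ ^ (-β) * |g x| ^ q) ^ p *
          ∫ x, ‖fderiv ℝ g x‖ ^ p) := by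
  have : Nonempty (Fin d) := ⟨⟨0, hd⟩⟩
  have hp0 : 0 < p := by linarith
  have hq0 : 0 < q := by linarith
  have hd1 : (1 : ℝ) ≤ d := by exact_mod_cast hd
  set c := d * volume.real (Metric.ball (0 : EuclideanSpace ℝ (Fin d)) 1) with hc
  have hc0 : 0 < c := mul_pos (by linarith)
    (ENNReal.toReal_pos (Metric.measure_ball_pos _ _ one_pos).ne' measure_ball_lt_top.ne)
  refine ⟨2 ^ p * 2 ^ (q * (p - 1)) * (c⁻¹) ^ (p - 1) * c⁻¹, by positivity, ?_⟩
  intro β hβ0 hβ1 g hrad hg hgc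
  set K := 2 ^ p * 2 ^ (q * (p - 1)) * (c⁻¹) ^ (p - 1) * c⁻¹ with hK
  have hK0 : 0 < K := by positivity
  obtain ⟨u, hu, huc, hgu⟩ := exists_radial_profile hd hrad hg hgc
  have hwint := integrable_norm_rpow_mul_radial hd hrad hg hgc hβ1 hq0
  set W := ∫ x, ‖x‖ ^ (-β) * |g x| ^ q with hWdef
  have hW0 : 0 ≤ W := integral_nonneg fun x => by positivity
  set S := ∫ x, ‖fderiv ℝ g x‖ ^ p with hS
  have hS0 : 0 ≤ S := integral_nonneg fun x => by positivity
  set κ := (d : ℝ) - 1 - β with hκ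
  have hκ0 : 0 ≤ κ := by linarith
  have hne : ∀ᵐ y : EuclideanSpace ℝ (Fin d), y ≠ 0 :=
    compl_mem_ae_iff.2 (measure_singleton (0 : EuclideanSpace ℝ (Fin d)))
  have hWJ : c * ∫ t in Set.Ioi 0, t ^ κ * |u t| ^ q ≤ W := by
    have := (integrable_norm_rpow_mul_profile hd hu.continuous huc hβ1 hq0).2
    simp_rw [hWdef, hgu]
    exact this.ge
  have hSJ := integral_Ioi_rpow_mul_deriv_profile_le hd hg hgc hu huc hgu hp0
  have hpt : ∀ x : EuclideanSpace ℝ (Fin d), x ≠ 0 →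
      |g x| ^ (p * (1 + q)) * ‖x‖ ^ (κ * p) ≤
        K * W ^ (p - 1) * S * (‖x‖ ^ (-β) * |g x| ^ q) := by
    intro x hx
    rw [hgu x]
    exact abs_profile_mul_rpow_le hu huc hp hq hc0 hW0 hS0 hκ0 (by linarith) hκ
      (norm_pos_iff.2 hx) hWJ hSJ
  calc _ ≤ ∫⁻ x, ENNReal.ofReal (K * W ^ (p - 1) * S * (‖x‖ ^ (-β) * |g x| ^ q)) := by
        refine lintegral_mono_ae ?_
        filter_upwards [hne] with x hx
        exact ENNReal.ofReal_le_ofReal (hpt x hx)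
    _ = ENNReal.ofReal (K * W ^ (p - 1) * S * W) := by
        rw [← ofReal_integral_eq_lintegral_ofReal (hwint.const_mul _)
          (Filter.Eventually.of_forall fun x => by positivity), integral_const_mul]
    _ = _ := by
        congr 1
        have : W ^ p = W ^ (p - 1) * W := by
          rw [← Real.rpow_add_one' hW0 (by simpa using hp0.ne'), sub_add_cancel]
        rw [this]; ring

theorem exists_sobolevSemi_bound {d : ℕ} (hd : 0 < d) {s p q : ℝ} (hs0 : 0 < s)
    (hs1 : s ≤ 1) (hp : 1 ≤ p) (hq : 1 ≤ q) :
    ∃ K : ℝ, 0 < K ∧ ∀ g : EuclideanSpace ℝ (Fin d) → ℝ, (∀ x y, ‖x‖ = ‖y‖ → g x = g y) →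
        ContDiff ℝ 1 g → HasCompactSupport g →
      ∃ S : ℝ, 0 ≤ S ∧ sobolevSemi d s p g = S ^ (1 / p) ∧
      ∀ β : ℝ, 0 ≤ β → β ≤ (d : ℝ) - 1 →
      ∫⁻ x, ENNReal.ofReal (|g x| ^ (p * (1 + q * s)) *
          ‖x‖ ^ (((d : ℝ) - 1 - β) * (s * p))) ≤
        ENNReal.ofReal (K * (∫ x, ‖x‖ ^ (-β) * |g x| ^ q) ^ (s * p) * S) := by
  rcases hs1.eq_or_lt with rfl | hs1
  · obtain ⟨K, hK, h⟩ := lintegral_radial_rpow_le_gradient hd hp hq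
    refine ⟨K, hK, fun g hrad hg hgc => ⟨∫ x, ‖fderiv ℝ g x‖ ^ p,
      integral_nonneg fun x => by positivity, by simp [sobolevSemi], fun β hβ0 hβ1 => ?_⟩⟩
    simpa only [mul_one, one_mul] using h β hβ0 hβ1 g hrad hg hgc
  · obtain ⟨K, hK, h⟩ := lintegral_radial_rpow_le_gagliardo hd hs0 hs1 hp hq
    refine ⟨K, hK, fun g hrad hg hgc =>
      ⟨∫ x, ∫ y, |g x - g y| ^ p / ‖x - y‖ ^ ((d : ℝ) + s * p),
        integral_nonneg fun x => integral_nonneg fun y => by positivity,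
        by simp [sobolevSemi, hs1.ne, hs0.ne'], fun β hβ0 hβ1 => h β hβ0 hβ1 g hrad hg hgc⟩⟩

theorem lintegral_rpow_interpolation {d : ℕ} (hd : 0 < d) {g : EuclideanSpace ℝ (Fin d) → ℝ}
    (hg : Measurable g) {θ q Q β κ γ : ℝ} (hθ0 : 0 ≤ θ) (hθ1 : θ ≤ 1) (hq : 0 ≤ q) (hQ : 0 ≤ Q)
    (hγ : γ = q * (1 - θ) + Q * θ) (hβ : β * (1 - θ) = κ * θ) :
    ∫⁻ x, ENNReal.ofReal (|g x| ^ γ) ≤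
      (∫⁻ x, ENNReal.ofReal (‖x‖ ^ (-β) * |g x| ^ q)) ^ (1 - θ) *
        (∫⁻ x, ENNReal.ofReal (|g x| ^ Q * ‖x‖ ^ κ)) ^ θ := by
  have : Nonempty (Fin d) := ⟨⟨0, hd⟩⟩
  have hθ1' : 0 ≤ 1 - θ := by linarith
  refine le_trans ?_ (ENNReal.lintegral_mul_norm_pow_le (by fun_prop) (by fun_prop) hθ1' hθ0
    (sub_add_cancel 1 θ))
  refine lintegral_mono_ae ?_
  have hne : ∀ᵐ y : EuclideanSpace ℝ (Fin d), y ≠ 0 :=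
    compl_mem_ae_iff.2 (measure_singleton (0 : EuclideanSpace ℝ (Fin d)))
  filter_upwards [hne] with x hx
  have hr : 0 < ‖x‖ := norm_pos_iff.2 hx
  rw [ENNReal.ofReal_rpow_of_nonneg (by positivity) hθ1',
    ENNReal.ofReal_rpow_of_nonneg (by positivity) hθ0, ← ENNReal.ofReal_mul (by positivity)]
  refine ENNReal.ofReal_le_ofReal (le_of_eq ?_)
  rw [Real.mul_rpow (by positivity) (by positivity), Real.mul_rpow (by positivity) (by positivity),
    ← Real.rpow_mul hr.le, ← Real.rpow_mul hr.le, ← Real.rpow_mul (abs_nonneg _),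
    ← Real.rpow_mul (abs_nonneg _)]
  have e1 : ‖x‖ ^ (-β * (1 - θ)) * ‖x‖ ^ (κ * θ) = 1 := by
    rw [← Real.rpow_add hr, neg_mul, hβ, neg_add_cancel, Real.rpow_zero]
  calc |g x| ^ γ = |g x| ^ (q * (1 - θ)) * |g x| ^ (Q * θ) := by
        rw [← Real.rpow_add_of_nonneg (abs_nonneg _) (by positivity) (by positivity), hγ]
    _ = |g x| ^ (q * (1 - θ)) * |g x| ^ (Q * θ) * (‖x‖ ^ (-β * (1 - θ)) * ‖x‖ ^ (κ * θ)) := by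
        rw [e1, mul_one]
    _ = _ := by ring

theorem rpow_le_of_interpolation {T W S K p q θ γ a τ : ℝ} (hT : 0 ≤ T) (hW : 0 ≤ W) (hS : 0 ≤ S)
    (hK : 0 < K) (hθ0 : 0 ≤ θ) (hθ1 : θ ≤ 1) (hp : 0 < p) (hq : 0 < q) (hτ : 0 ≤ τ)
    (hγ1 : 1 ≤ γ) (hγ : γ = q * (1 - θ) + (p + q * τ) * θ) (ha : a * γ = p * θ)
    (h : T ≤ W ^ (1 - θ) * (K * W ^ τ * S) ^ θ) :
    T ^ (1 / γ) ≤ max 1 K * (S ^ (1 / p)) ^ a * (W ^ (1 / q)) ^ (1 - a) := by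
  have hγ0 : 0 < γ := by linarith
  have hθ1' : 0 ≤ 1 - θ := by linarith
  have e1 : 1 / p * a = θ * (1 / γ) := by
    field_simp
    linarith
  have e2 : 1 / q * (1 - a) = (1 - θ + τ * θ) * (1 / γ) := by
    have : a = p * θ / γ := by field_simp; linarith
    rw [this]
    field_simp
    rw [hγ]; ring
  have h1 := Real.rpow_le_rpow hT h (by positivity : 0 ≤ 1 / γ)
  have e3 : W ^ (1 - θ) * (K * W ^ τ * S) ^ θ = K ^ θ * S ^ θ * W ^ (1 - θ + τ * θ) := by
    rw [Real.mul_rpow (by positivity) hS, Real.mul_rpow hK.le (by positivity),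
      ← Real.rpow_mul hW, Real.rpow_add_of_nonneg hW hθ1' (by positivity)]
    ring
  rw [e3, Real.mul_rpow (by positivity) (by positivity),
    Real.mul_rpow (by positivity) (by positivity), ← Real.rpow_mul hK.le, ← Real.rpow_mul hS,
    ← Real.rpow_mul hW, ← e1, ← e2, Real.rpow_mul hS, Real.rpow_mul hW] at h1
  refine h1.trans ?_
  have hle : θ * (1 / γ) ≤ 1 := by
    rw [mul_one_div, div_le_one hγ0]; linarith
  have hK1 : K ^ (1 / p * a) ≤ max 1 K := by
    rw [e1]
    calc K ^ (θ * (1 / γ)) ≤ (max 1 K) ^ (θ * (1 / γ)) :=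
          Real.rpow_le_rpow hK.le (le_max_right _ _) (by positivity)
      _ ≤ (max 1 K) ^ (1 : ℝ) := Real.rpow_le_rpow_of_exponent_le (le_max_left _ _) hle
      _ = _ := Real.rpow_one _
  gcongr

theorem stmt5 (d : ℕ) (hd : 2 ≤ d) (s p q α : ℝ)
    (hs0 : 0 < s) (hs1 : s ≤ 1) (hp1 : 1 ≤ p) (hq1 : 1 ≤ q)
    (hα0 : 0 < α) (hαd : α < d)
    (hD : 0 < p * ((d : ℝ) + α) - 2 * q * ((d : ℝ) - s * p)) :
    ∃ C > 0, ∃ ε₀ > 0, ∀ ε : ℝ, 0 < ε → ε < ε₀ →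
      0 < p * ((d : ℝ) + α - 2 * ε) - 2 * q * ((d : ℝ) - s * p) →
      ∀ γε aε : ℝ,
      γε = q + (q * (s * p - 1) + p) * ((d : ℝ) - α + 2 * ε) /
        (s * p * ((d : ℝ) + α - 2 * ε - 2) + ((d : ℝ) - α + 2 * ε)) →
      aε = p * (γε * ((d : ℝ) + α - 2 * ε) - 2 * q * d) /
        (γε * (p * ((d : ℝ) + α - 2 * ε) - 2 * q * ((d : ℝ) - s * p))) →
      ∀ g : EuclideanSpace ℝ (Fin d) → ℝ,
        (∀ x y : EuclideanSpace ℝ (Fin d), ‖x‖ = ‖y‖ → g x = g y) →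
        ContDiff ℝ 1 g → HasCompactSupport g →
        (∫ x, |g x| ^ γε) ^ (1 / γε) ≤
          C * sobolevSemi d s p g ^ aε *
            ((∫ x, (‖x‖ ^ (-(((d : ℝ) - α) / (2 * q) + ε / q)) * |g x|) ^ q) ^ (1 / q))
              ^ (1 - aε) := by
  have hd0 : 0 < d := by omega
  have hd2 : (2 : ℝ) ≤ d := by exact_mod_cast hd
  have hp0 : 0 < p := by linarith
  have hq0 : 0 < q := by linarith
  obtain ⟨K, hK, hmain⟩ := exists_sobolevSemi_bound hd0 hs0 hs1 hp1 hq1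
  refine ⟨max 1 K, by positivity, α / 2, by positivity, ?_⟩
  intro ε hε0 hε1 hDε γ a hγ ha g hrad hg hgc
  obtain ⟨S, hS0, hS, hbound⟩ := hmain g hrad hg hgc
  obtain ⟨β, hβ⟩ : ∃ β : ℝ, β = ((d : ℝ) - α) / 2 + ε := ⟨_, rfl⟩
  obtain ⟨κ, hκ⟩ : ∃ κ : ℝ, κ = (d : ℝ) - 1 - β := ⟨_, rfl⟩
  have hβ0 : 0 < β := by linarith
  have hκ0 : 0 < κ := by linarith
  have hsp : 0 < s * p := by positivity
  have hden : 0 < β + κ * (s * p) := by positivity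
  obtain ⟨θ, hθ⟩ : ∃ θ : ℝ, θ = β / (β + κ * (s * p)) := ⟨_, rfl⟩
  have hθ' : θ * (β + κ * (s * p)) = β := by rw [hθ, div_mul_cancel₀ _ hden.ne']
  have hθ0 : 0 ≤ θ := by rw [hθ]; positivity
  have hθ1 : θ ≤ 1 := by
    rw [hθ, div_le_one hden]
    have : 0 ≤ κ * (s * p) := by positivity
    linarith
  have hγ' : γ = q * (1 - θ) + (p + q * (s * p)) * θ := by
    have e1 : (d : ℝ) - α + 2 * ε = 2 * β := by linarith
    have e2 : (d : ℝ) + α - 2 * ε - 2 = 2 * κ := by linarith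
    have e3 : s * p * (2 * κ) + 2 * β = 2 * (β + κ * (s * p)) := by ring
    rw [hγ, e1, e2, e3, hθ]
    field_simp
    ring
  have hγ1 : 1 ≤ γ := by
    rw [hγ']
    have h1 : 1 ≤ p + q * (s * p) := by
      have : 0 < q * (s * p) := by positivity
      linarith
    nlinarith [mul_le_mul_of_nonneg_right hq1 (by linarith : 0 ≤ 1 - θ),
      mul_le_mul_of_nonneg_right h1 hθ0]
  have hγ0 : 0 < γ := by linarith
  have haγ : a * γ = p * θ := by
    have e1 : (d : ℝ) + α - 2 * ε = 2 * ((d : ℝ) - β) := by linarith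
    have e2 : (d : ℝ) = κ + 1 + β := by linarith
    rw [e1] at ha hDε
    have key : γ * (2 * ((d : ℝ) - β)) - 2 * q * d =
        θ * (p * (2 * ((d : ℝ) - β)) - 2 * q * ((d : ℝ) - s * p)) := by
      rw [hγ', e2]
      linear_combination (2 * q) * hθ'
    rw [ha, key]
    rw [div_mul_eq_mul_div, div_eq_iff (mul_pos hγ0 hDε).ne']
    ring
  have hwint := integrable_norm_rpow_mul_radial hd0 hrad hg hgc (by linarith : β ≤ (d : ℝ) - 1) hq0
  have hW : ∫ x, (‖x‖ ^ (-(((d : ℝ) - α) / (2 * q) + ε / q)) * |g x|) ^ q =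
      ∫ x, ‖x‖ ^ (-β) * |g x| ^ q := by
    congr 1
    ext x
    rw [Real.mul_rpow (by positivity) (abs_nonneg _), ← Real.rpow_mul (norm_nonneg _)]
    congr 2
    rw [hβ]
    field_simp
  have hb := hbound β hβ0.le (by linarith)
  rw [hW, hS]
  have hWlin := (ofReal_integral_eq_lintegral_ofReal hwint
      (Filter.Eventually.of_forall fun x => by positivity)).symm
  have hW0 : 0 ≤ ∫ x, ‖x‖ ^ (-β) * |g x| ^ q := integral_nonneg fun x => by positivity
  generalize (∫ x, ‖x‖ ^ (-β) * |g x| ^ q) = W at hb hWlin hW0 ⊢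
  have h_intg := lintegral_rpow_interpolation hd0 hg.continuous.measurable hθ0 hθ1 hq0.le
    (Q := p * (1 + q * s)) (β := β) (κ := κ * (s * p)) (by positivity) (γ := γ)
    (by rw [hγ']; ring) (by linear_combination -hθ')
  rw [hκ, hWlin] at h_intg
  have hθ1' : 0 ≤ 1 - θ := by linarith
  have h1 := h_intg.trans (mul_le_mul_right (ENNReal.rpow_le_rpow hb hθ0) _)
  rw [ENNReal.ofReal_rpow_of_nonneg hW0 hθ1',
    ENNReal.ofReal_rpow_of_nonneg (by positivity) hθ0, ← ENNReal.ofReal_mul (by positivity)] at h1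
  refine rpow_le_of_interpolation (integral_nonneg fun x => by positivity) hW0 hS0 hK hθ0 hθ1 hp0
    hq0 hsp.le hγ1 hγ' haγ ?_
  rw [integral_eq_lintegral_of_nonneg_ae (Filter.Eventually.of_forall fun x => by positivity)
    (by have := hg.continuous.measurable
        exact Measurable.aestronglyMeasurable (by fun_prop))]
  exact ENNReal.toReal_le_of_le_ofReal (by positivity) h1
end

section
/- Let d ≥ 1, 0 < s < 1, and 1 ≤ p < ∞. Then there exists a constant C > 0 such that for every g ∈ C_c^∞(ℝ^d): ( ∫_{ℝ^d}∫_{ℝ^d} |g(x)−g(y)|^p / |x−y|^{d+sp} dx dy )^{1/p} ≤ C ‖∇g‖_{L^p(ℝ^d)}^s ‖g‖_{L^p(ℝ^d)}^{1−s}. -/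
open MeasureTheory Real

lemma integral_Ioi_min_rpow_le {s p a b : ℝ} (hs0 : 0 < s) (hs1 : s < 1) (hp : 0 < p)
    (ha : 0 < a) (hb : 0 < b) :
    IntegrableOn (fun r : ℝ ↦ min (a * r ^ ((1 - s) * p - 1)) (b * r ^ (-(s * p) - 1)))
        (Set.Ioi 0) ∧
      ∫ r in Set.Ioi (0 : ℝ), min (a * r ^ ((1 - s) * p - 1)) (b * r ^ (-(s * p) - 1)) ≤
        (1 / ((1 - s) * p) + 1 / (s * p)) * (a ^ s * b ^ (1 - s)) := by
  have hsp : 0 < s * p := mul_pos hs0 hp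
  have hsp' : 0 < (1 - s) * p := mul_pos (by linarith) hp
  set R : ℝ := (b / a) ^ (1 / p) with hR
  have hba : 0 < b / a := div_pos hb ha
  have hR0 : 0 < R := rpow_pos_of_pos hba _
  have hmeas : Measurable
      (fun r : ℝ ↦ min (a * r ^ ((1 - s) * p - 1)) (b * r ^ (-(s * p) - 1))) := by fun_prop
  have i1 : IntegrableOn (fun r : ℝ ↦ a * r ^ ((1 - s) * p - 1)) (Set.Ioc 0 R) :=
    ((intervalIntegrable_iff_integrableOn_Ioc_of_le hR0.le).1
      (intervalIntegral.intervalIntegrable_rpow' (by linarith))).const_mul a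
  have i2 : IntegrableOn (fun r : ℝ ↦ b * r ^ (-(s * p) - 1)) (Set.Ioi R) :=
    (integrableOn_Ioi_rpow_of_lt (by linarith) hR0).const_mul b
  have j1 : IntegrableOn
      (fun r : ℝ ↦ min (a * r ^ ((1 - s) * p - 1)) (b * r ^ (-(s * p) - 1))) (Set.Ioc 0 R) := by
    refine Integrable.mono' i1 hmeas.aestronglyMeasurable ?_
    filter_upwards [ae_restrict_mem measurableSet_Ioc] with r hr
    have h0 : 0 < r := hr.1
    rw [norm_of_nonneg (by positivity)]
    exact min_le_left _ _
  have j2 : IntegrableOn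
      (fun r : ℝ ↦ min (a * r ^ ((1 - s) * p - 1)) (b * r ^ (-(s * p) - 1))) (Set.Ioi R) := by
    refine Integrable.mono' i2 hmeas.aestronglyMeasurable ?_
    filter_upwards [ae_restrict_mem measurableSet_Ioi] with r hr
    have h0 : 0 < r := hR0.trans hr
    rw [norm_of_nonneg (by positivity)]
    exact min_le_right _ _
  rw [← Set.Ioc_union_Ioi_eq_Ioi hR0.le]
  refine ⟨j1.union j2, ?_⟩
  rw [setIntegral_union (Set.Ioc_disjoint_Ioi le_rfl) measurableSet_Ioi j1 j2]
  have e1 : ∫ r in Set.Ioc 0 R, a * r ^ ((1 - s) * p - 1) =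
      1 / ((1 - s) * p) * (a ^ s * b ^ (1 - s)) := by
    rw [integral_const_mul, ← intervalIntegral.integral_of_le hR0.le,
      integral_rpow (Or.inl (by linarith)), sub_add_cancel, zero_rpow hsp'.ne', hR, ← rpow_mul hba.le,
      show 1 / p * ((1 - s) * p) = 1 - s by field_simp, div_rpow hb.le ha.le]
    have : a ^ s * a ^ (1 - s) = a := by rw [← rpow_add ha]; simp
    have h1 : 1 - s ≠ 0 := by linarith
    have h2 : 0 < a ^ (1 - s) := rpow_pos_of_pos ha _
    field_simp
    linear_combination -b ^ (1 - s) * this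
  have e2 : ∫ r in Set.Ioi R, b * r ^ (-(s * p) - 1) =
      1 / (s * p) * (a ^ s * b ^ (1 - s)) := by
    rw [integral_const_mul, integral_Ioi_rpow_of_lt (by linarith) hR0, sub_add_cancel, hR,
      ← rpow_mul hba.le, show 1 / p * (-(s * p)) = -s by field_simp, rpow_neg hba.le,
      div_rpow hb.le ha.le]
    have : b ^ s * b ^ (1 - s) = b := by rw [← rpow_add hb]; simp
    have h2 : 0 < b ^ s := rpow_pos_of_pos hb _
    have h3 : 0 < a ^ s := rpow_pos_of_pos ha _
    field_simp
    exact this.symm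
  rw [add_mul, ← e1, ← e2]
  gcongr ?_ + ?_
  · exact setIntegral_mono j1 i1 fun r ↦ min_le_left _ _
  · exact setIntegral_mono j2 i2 fun r ↦ min_le_right _ _

lemma exists_lintegral_rpow_norm_mul_min_le {d : ℕ} (hd : 1 ≤ d) {s p : ℝ}
    (hs0 : 0 < s) (hs1 : s < 1) (hp : 0 < p) :
    ∃ K : ℝ, 0 ≤ K ∧ ∀ a b : ℝ, 0 ≤ a → 0 ≤ b →
      ∫⁻ h : EuclideanSpace ℝ (Fin d),
        ENNReal.ofReal ((‖h‖ ^ ((d : ℝ) + s * p))⁻¹ * min (a * ‖h‖ ^ p) b) ≤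
      ENNReal.ofReal (K * (a ^ s * b ^ (1 - s))) := by
  have hsp : 0 < s * p := mul_pos hs0 hp
  have hsp' : 0 < (1 - s) * p := mul_pos (by linarith) hp
  set E := EuclideanSpace ℝ (Fin d)
  have : Nonempty (Fin d) := ⟨⟨0, hd⟩⟩
  have : Nontrivial E := inferInstanceAs (Nontrivial (EuclideanSpace ℝ (Fin d)))
  have hdim : Module.finrank ℝ E = d := by simp [E]
  set V : ℝ := (volume : Measure E).real (Metric.ball 0 1)
  have hV : 0 ≤ V := measureReal_nonneg
  refine ⟨d * V * (1 / ((1 - s) * p) + 1 / (s * p)), by positivity, fun a b ha hb ↦ ?_⟩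
  rcases ha.eq_or_lt with rfl | ha
  · simp [hb]
  rcases hb.eq_or_lt with rfl | hb
  · have h (x : E) : min (a * ‖x‖ ^ p) 0 = 0 := min_eq_right (by positivity)
    simp [h]
  obtain ⟨hi, hle⟩ := integral_Ioi_min_rpow_le hs0 hs1 hp ha hb
  have hcongr : Set.EqOn
      (fun r : ℝ ↦ r ^ (Module.finrank ℝ E - 1) • ((r ^ ((d : ℝ) + s * p))⁻¹ * min (a * r ^ p) b))
      (fun r : ℝ ↦ min (a * r ^ ((1 - s) * p - 1)) (b * r ^ (-(s * p) - 1))) (Set.Ioi 0) := by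
    intro r hr
    have hr : 0 < r := hr
    have h1 : r ^ (d - 1) * (r ^ ((d : ℝ) + s * p))⁻¹ = r ^ (-(s * p) - 1) := by
      rw [← rpow_natCast, ← rpow_neg hr.le, ← rpow_add hr]
      push_cast [hd]
      ring_nf
    have h2 : r ^ ((1 - s) * p - 1) = r ^ (-(s * p) - 1) * r ^ p := by
      rw [← rpow_add hr]
      ring_nf
    simp only [hdim, smul_eq_mul]
    rw [← mul_assoc, h1, h2, mul_min_of_nonneg _ _ (by positivity)]
    ring_nf
  have hint : Integrable
      (fun h : E ↦ (‖h‖ ^ ((d : ℝ) + s * p))⁻¹ * min (a * ‖h‖ ^ p) b) := by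
    rw [integrable_fun_norm_addHaar volume
      (f := fun r : ℝ ↦ (r ^ ((d : ℝ) + s * p))⁻¹ * min (a * r ^ p) b)]
    exact (integrableOn_congr_fun hcongr measurableSet_Ioi).2 hi
  rw [← ofReal_integral_eq_lintegral_ofReal hint (.of_forall fun h ↦ by positivity)]
  refine ENNReal.ofReal_le_ofReal ?_
  rw [integral_fun_norm_addHaar volume
      (fun r : ℝ ↦ (r ^ ((d : ℝ) + s * p))⁻¹ * min (a * r ^ p) b),
    setIntegral_congr_fun measurableSet_Ioi hcongr, hdim, nsmul_eq_mul, smul_eq_mul, mul_assoc,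
    mul_assoc]
  gcongr

lemma lintegral_enorm_sub_rpow_le_two_rpow {E : Type*} [NormedAddCommGroup E]
    [MeasurableSpace E] [BorelSpace E] (μ : Measure E) [μ.IsAddRightInvariant]
    {p : ℝ} (hp : 1 ≤ p) {g : E → ℝ} (hg : Measurable g) (h : E) :
    ∫⁻ x, ‖g x - g (x + h)‖ₑ ^ p ∂μ ≤ 2 ^ p * ∫⁻ x, ‖g x‖ₑ ^ p ∂μ := by
  calc ∫⁻ x, ‖g x - g (x + h)‖ₑ ^ p ∂μ
      ≤ ∫⁻ x, 2 ^ (p - 1) * (‖g x‖ₑ ^ p + ‖g (x + h)‖ₑ ^ p) ∂μ := by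
        refine lintegral_mono fun x ↦ ?_
        refine le_trans ?_ (ENNReal.rpow_add_le_mul_rpow_add_rpow _ _ hp)
        gcongr
        exact enorm_sub_le
    _ = 2 ^ (p - 1) * (2 * ∫⁻ x, ‖g x‖ₑ ^ p ∂μ) := by
        rw [lintegral_const_mul _ (by fun_prop), lintegral_add_left (by fun_prop),
          lintegral_add_right_eq_self (fun x ↦ ‖g x‖ₑ ^ p) h, two_mul]
    _ = 2 ^ p * ∫⁻ x, ‖g x‖ₑ ^ p ∂μ := by
        rw [← mul_assoc]
        congr 1
        conv_lhs => rw [← ENNReal.rpow_one 2, ← ENNReal.rpow_mul,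
          ← ENNReal.rpow_add _ _ (by simp) (by simp)]
        simp

lemma enorm_sub_rpow_le_lintegral_fderiv {E : Type*} [NormedAddCommGroup E] [NormedSpace ℝ E]
    {p : ℝ} (hp : 1 ≤ p) {g : E → ℝ} (hg : ContDiff ℝ 1 g) (x h : E) :
    ‖g x - g (x + h)‖ₑ ^ p ≤
      ‖h‖ₑ ^ p * ∫⁻ t in Set.Ioc (0 : ℝ) 1, ‖fderiv ℝ g (x + t • h)‖ₑ ^ p := by
  have hp0 : 0 < p := by linarith
  have hc : Continuous fun t : ℝ ↦ fderiv ℝ g (x + t • h) :=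
    (hg.continuous_fderiv one_ne_zero).comp (by fun_prop)
  have hftc : g (x + h) - g x = ∫ t in Set.Ioc (0 : ℝ) 1, fderiv ℝ g (x + t • h) h := by
    rw [← intervalIntegral.integral_of_le zero_le_one,
      intervalIntegral.integral_eq_sub_of_hasDerivAt (f := fun t : ℝ ↦ g (x + t • h))]
    · simp
    · intro t _
      have h1 : HasDerivAt (fun t : ℝ ↦ x + t • h) h t := by
        simpa using ((hasDerivAt_id t).smul_const h).const_add x
      exact ((hg.differentiable one_ne_zero _).hasFDerivAt).comp_hasDerivAt t h1
    · exact (hc.clm_apply continuous_const).intervalIntegrable _ _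
  have : IsProbabilityMeasure (volume.restrict (Set.Ioc (0 : ℝ) 1)) := ⟨by simp⟩
  have hmono := eLpNorm'_le_eLpNorm'_of_exponent_le one_pos hp
    (volume.restrict (Set.Ioc (0 : ℝ) 1)) (f := fun t : ℝ ↦ ‖fderiv ℝ g (x + t • h)‖)
    hc.norm.aestronglyMeasurable
  simp only [eLpNorm', enorm_norm, ENNReal.rpow_one, div_one] at hmono
  rw [← neg_sub, enorm_neg, hftc]
  calc _ ≤ (∫⁻ t in Set.Ioc (0 : ℝ) 1, ‖h‖ₑ * ‖fderiv ℝ g (x + t • h)‖ₑ) ^ p := by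
        gcongr
        refine (enorm_integral_le_lintegral_enorm _).trans (lintegral_mono fun t ↦ ?_)
        rw [mul_comm]
        exact ContinuousLinearMap.le_opENorm _ _
    _ = ‖h‖ₑ ^ p * (∫⁻ t in Set.Ioc (0 : ℝ) 1, ‖fderiv ℝ g (x + t • h)‖ₑ) ^ p := by
        rw [lintegral_const_mul' _ _ (by simp), ENNReal.mul_rpow_of_nonneg _ _ hp0.le]
    _ ≤ _ := by
        gcongr
        refine (ENNReal.rpow_le_rpow hmono hp0.le).trans_eq ?_
        rw [← ENNReal.rpow_mul, one_div_mul_cancel hp0.ne', ENNReal.rpow_one]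

lemma lintegral_enorm_sub_rpow_le_fderiv {E : Type*} [NormedAddCommGroup E] [NormedSpace ℝ E]
    [FiniteDimensional ℝ E] [MeasurableSpace E] [BorelSpace E]
    (μ : Measure E) [SFinite μ] [μ.IsAddRightInvariant]
    {p : ℝ} (hp : 1 ≤ p) {g : E → ℝ} (hg : ContDiff ℝ 1 g) (h : E) :
    ∫⁻ x, ‖g x - g (x + h)‖ₑ ^ p ∂μ ≤ ‖h‖ₑ ^ p * ∫⁻ x, ‖fderiv ℝ g x‖ₑ ^ p ∂μ := by
  have hc := hg.continuous_fderiv one_ne_zero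
  have hm : Measurable fun z : E × ℝ ↦ ‖fderiv ℝ g (z.1 + z.2 • h)‖ₑ ^ p := by
    have : Continuous fun z : E × ℝ ↦ fderiv ℝ g (z.1 + z.2 • h) := hc.comp (by fun_prop)
    exact this.enorm.measurable.pow_const p
  refine (lintegral_mono fun x ↦ enorm_sub_rpow_le_lintegral_fderiv hp hg x h).trans ?_
  rw [lintegral_const_mul' _ _ (by finiteness), lintegral_lintegral_swap hm.aemeasurable]
  simp [lintegral_add_right_eq_self (fun x ↦ ‖fderiv ℝ g x‖ₑ ^ p)]

lemma lintegral_enorm_rpow_eq_ofReal {E F : Type*} [TopologicalSpace E] [MeasurableSpace E]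
    [OpensMeasurableSpace E] [NormedAddCommGroup F] (μ : Measure E)
    [IsFiniteMeasureOnCompacts μ] {p : ℝ} (hp : 0 < p) {f : E → F} (hf : Continuous f)
    (hfc : HasCompactSupport f) :
    ∫⁻ x, ‖f x‖ₑ ^ p ∂μ = ENNReal.ofReal (∫ x, ‖f x‖ ^ p ∂μ) := by
  have hi : Integrable (fun x ↦ ‖f x‖ ^ p) μ :=
    (hf.norm.rpow_const fun _ ↦ .inr hp.le).integrable_of_hasCompactSupport
      (hfc.norm.comp_left (g := fun t : ℝ ↦ t ^ p) (zero_rpow hp.ne'))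
  rw [ofReal_integral_eq_lintegral_ofReal hi (.of_forall fun x ↦ by positivity)]
  simp [← ENNReal.ofReal_rpow_of_nonneg (norm_nonneg _) hp.le]

theorem stmt17 (d : ℕ) (hd : 1 ≤ d) (s p : ℝ)
    (hs0 : 0 < s) (hs1 : s < 1) (hp1 : 1 ≤ p) :
    ∃ C > 0, ∀ g : EuclideanSpace ℝ (Fin d) → ℝ,
      ContDiff ℝ (⊤ : ℕ∞) g → HasCompactSupport g →
      (∫ x, ∫ y, |g x - g y| ^ p / ‖x - y‖ ^ ((d : ℝ) + s * p)) ^ (1 / p) ≤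
        C * ((∫ x, ‖fderiv ℝ g x‖ ^ p) ^ (1 / p)) ^ s *
          ((∫ x, |g x| ^ p) ^ (1 / p)) ^ (1 - s) := by
  have hp : 0 < p := by linarith
  obtain ⟨K, hK0, hK⟩ := exists_lintegral_rpow_norm_mul_min_le hd hs0 hs1 hp
  have hK1 : 0 < K + 1 := by linarith
  refine ⟨((K + 1) * (2 ^ p) ^ (1 - s)) ^ (1 / p), by positivity, fun g hg hgc ↦ ?_⟩
  have hg1 : ContDiff ℝ 1 g := hg.of_le (by exact_mod_cast le_top)
  have hgcont : Continuous g := hg1.continuous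
  set A : ℝ := ∫ x, ‖fderiv ℝ g x‖ ^ p with hA
  set B : ℝ := ∫ x, |g x| ^ p with hB
  have hA0 : 0 ≤ A := integral_nonneg fun x ↦ by positivity
  have hB0 : 0 ≤ B := integral_nonneg fun x ↦ by positivity
  have hAe := lintegral_enorm_rpow_eq_ofReal volume hp (hg1.continuous_fderiv one_ne_zero)
    (hgc.fderiv ℝ)
  have hBe := lintegral_enorm_rpow_eq_ofReal volume hp hgcont hgc
  simp only [norm_eq_abs] at hBe
  rw [← hA] at hAe
  rw [← hB] at hBe
  have hinner (h : EuclideanSpace ℝ (Fin d)) :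
      ∫⁻ x, ‖g x - g (x + h)‖ₑ ^ p ≤ ENNReal.ofReal (min (A * ‖h‖ ^ p) (2 ^ p * B)) := by
    rw [ENNReal.ofReal_min]
    refine le_min ?_ ?_
    · refine (lintegral_enorm_sub_rpow_le_fderiv volume hp1 hg1 h).trans_eq ?_
      rw [hAe, mul_comm, ENNReal.ofReal_mul hA0,
        ← ENNReal.ofReal_rpow_of_nonneg (norm_nonneg _) hp.le, ofReal_norm]
    · refine (lintegral_enorm_sub_rpow_le_two_rpow volume hp1 hgcont.measurable h).trans_eq ?_
      rw [hBe, ENNReal.ofReal_mul (by positivity),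
        ← ENNReal.ofReal_rpow_of_nonneg zero_le_two hp.le, ENNReal.ofReal_ofNat]
  have hmain : ∫ x, ∫ y, |g x - g y| ^ p / ‖x - y‖ ^ ((d : ℝ) + s * p) ≤
      K * (A ^ s * (2 ^ p * B) ^ (1 - s)) := by
    rw [← ENNReal.ofReal_le_ofReal_iff (by positivity)]
    refine (ofReal_le_enorm _).trans ?_
    calc _ ≤ ∫⁻ x, ∫⁻ y, ‖|g x - g y| ^ p / ‖x - y‖ ^ ((d : ℝ) + s * p)‖ₑ :=
          (enorm_integral_le_lintegral_enorm _).trans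
            (lintegral_mono fun x ↦ enorm_integral_le_lintegral_enorm _)
      _ = ∫⁻ x, ∫⁻ h, ENNReal.ofReal ((‖h‖ ^ ((d : ℝ) + s * p))⁻¹) * ‖g x - g (x + h)‖ₑ ^ p := by
          refine lintegral_congr fun x ↦ ?_
          rw [← lintegral_add_left_eq_self _ x]
          refine lintegral_congr fun h ↦ ?_
          rw [enorm_of_nonneg (by positivity), div_eq_inv_mul, ENNReal.ofReal_mul (by positivity),
            ← ENNReal.ofReal_rpow_of_nonneg (abs_nonneg _) hp.le, ← norm_eq_abs, ofReal_norm]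
          simp
      _ = ∫⁻ h, ENNReal.ofReal ((‖h‖ ^ ((d : ℝ) + s * p))⁻¹) * ∫⁻ x, ‖g x - g (x + h)‖ₑ ^ p := by
          rw [lintegral_lintegral_swap]
          · refine lintegral_congr fun h ↦ ?_
            rw [lintegral_const_mul' _ _ ENNReal.ofReal_ne_top]
          · have := hgcont.measurable
            refine Measurable.aemeasurable ?_
            unfold Function.uncurry
            fun_prop
      _ ≤ ∫⁻ h, ENNReal.ofReal
            ((‖h‖ ^ ((d : ℝ) + s * p))⁻¹ * min (A * ‖h‖ ^ p) (2 ^ p * B)) := by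
          refine lintegral_mono fun h ↦ ?_
          rw [ENNReal.ofReal_mul (by positivity)]
          gcongr
          exact hinner h
      _ ≤ _ := hK A (2 ^ p * B) hA0 (by positivity)
  calc _ ≤ ((K + 1) * (A ^ s * (2 ^ p * B) ^ (1 - s))) ^ (1 / p) := by
        refine rpow_le_rpow (integral_nonneg fun x ↦ integral_nonneg fun y ↦ by positivity) ?_
          (by positivity)
        refine hmain.trans ?_
        gcongr
        linarith
    _ = _ := by
        rw [← rpow_mul hA0, ← rpow_mul hB0, mul_comm (1 / p) s, mul_comm (1 / p) (1 - s),
          rpow_mul hA0, rpow_mul hB0, ← mul_rpow (by positivity) (by positivity),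
          ← mul_rpow (by positivity) (by positivity), mul_rpow (by positivity) hB0]
        ring_nf
end

section
/- Let d ≥ 1, 0 < s < 1, 1 ≤ p < ∞, and let η ∈ C_c^∞(ℝ \ {0}) be a nonnegative function with support contained in (−1, 1). For λ > 0 and R > S > 0 define g_{λ,R,S}(x) = λ η((|x| − R)/S) for x ∈ ℝ^d. Then there exists a constant C > 0 (depending on d, s, p, η) such that for all R > S > 0 and λ > 0: ∫_{ℝ^d}∫_{ℝ^d} |g_{λ,R,S}(x) − g_{λ,R,S}(y)|^p / |x−y|^{d+sp} dx dy ≤ C λ^p R^{d−1} S^{1−sp}. -/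
open MeasureTheory Real

/-- The Gagliardo-type double integral of a nonnegative function dominated by
`(1_A(x) + 1_A(y)) K(x - y)` is at most `2 |A| ∫ K`. -/
theorem integral_integral_le_of_le_indicator_add {G : Type*} [AddCommGroup G]
    [MeasurableSpace G] [MeasurableAdd₂ G] [MeasurableNeg G] {μ : Measure G} [SFinite μ]
    [μ.IsAddLeftInvariant] [μ.IsNegInvariant] {F : G → G → ℝ} {K : G → ℝ} {A : Set G}
    (hA : MeasurableSet A) (hAfin : μ A ≠ ⊤) (hK : Integrable K μ) (hF0 : ∀ x y, 0 ≤ F x y)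
    (hF : ∀ x y, F x y ≤ (A.indicator 1 x + A.indicator 1 y) * K (x - y)) :
    ∫ x, ∫ y, F x y ∂μ ∂μ ≤ 2 * μ.real A * ∫ z, K z ∂μ := by
  have hind : Integrable (A.indicator (1 : G → ℝ)) μ :=
    (integrable_indicator_iff hA).2 (integrableOn_const hAfin)
  have hint : ∫ x, A.indicator (1 : G → ℝ) x ∂μ = μ.real A := integral_indicator_one hA
  have hconv : Integrable (fun x => ∫ y, A.indicator (1 : G → ℝ) y * K (x - y) ∂μ) μ :=
    hind.integrable_convolution (ContinuousLinearMap.mul ℝ ℝ) hK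
  have hconv_int : ∫ x, ∫ y, A.indicator (1 : G → ℝ) y * K (x - y) ∂μ ∂μ
      = μ.real A * ∫ z, K z ∂μ := by
    rw [← hint]
    exact integral_convolution (ContinuousLinearMap.mul ℝ ℝ) hind hK
  have hle : ∀ᵐ x ∂μ, ∫ y, F x y ∂μ ≤ A.indicator (1 : G → ℝ) x * ∫ z, K z ∂μ
      + ∫ y, A.indicator (1 : G → ℝ) y * K (x - y) ∂μ := by
    refine Filter.Eventually.of_forall fun x => ?_
    have h1 : Integrable (fun y => A.indicator (1 : G → ℝ) x * K (x - y)) μ :=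
      (hK.comp_sub_left x).const_mul _
    have h2 : Integrable (fun y => A.indicator (1 : G → ℝ) y * K (x - y)) μ := by
      refine ((hK.comp_sub_left x).indicator hA).congr (Filter.Eventually.of_forall fun y => ?_)
      by_cases hy : y ∈ A <;> simp [hy]
    calc ∫ y, F x y ∂μ
        ≤ ∫ y, (A.indicator (1 : G → ℝ) x * K (x - y)
            + A.indicator (1 : G → ℝ) y * K (x - y)) ∂μ :=
          integral_mono_of_nonneg (Filter.Eventually.of_forall fun y => hF0 x y) (h1.add h2)
            (Filter.Eventually.of_forall fun y => (hF x y).trans_eq (add_mul _ _ _))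
      _ = _ := by
          rw [integral_add h1 h2, integral_const_mul, integral_sub_left_eq_self K μ x]
  calc ∫ x, ∫ y, F x y ∂μ ∂μ
      ≤ ∫ x, (A.indicator (1 : G → ℝ) x * ∫ z, K z ∂μ
          + ∫ y, A.indicator (1 : G → ℝ) y * K (x - y) ∂μ) ∂μ :=
        integral_mono_of_nonneg
          (Filter.Eventually.of_forall fun x => integral_nonneg fun y => hF0 x y)
          ((hind.mul_const _).add hconv) hle
    _ = 2 * μ.real A * ∫ z, K z ∂μ := by
        rw [integral_add (hind.mul_const _) hconv, integral_mul_const, hint, hconv_int]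
        ring

section Normed

variable {E : Type*} [NormedAddCommGroup E] [NormedSpace ℝ E] [FiniteDimensional ℝ E]
  [MeasurableSpace E] [BorelSpace E] (μ : Measure E) [μ.IsAddHaarMeasure]

theorem integrable_min_one_norm_rpow_div [Nontrivial E] {p s : ℝ} (hp : 0 < p) (hs0 : 0 < s) (hs1 : s < 1) :
    Integrable (fun z : E =>
      min 1 ‖z‖ ^ p / ‖z‖ ^ ((Module.finrank ℝ E : ℝ) + s * p)) μ := by
  refine (integrable_fun_norm_addHaar μ
    (f := fun r => min 1 r ^ p / r ^ ((Module.finrank ℝ E : ℝ) + s * p))).2 ?_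
  have hd : 1 ≤ Module.finrank ℝ E := Module.finrank_pos
  have hpow : ∀ r : ℝ, 0 < r → r ^ (Module.finrank ℝ E - 1)
      = r ^ ((Module.finrank ℝ E : ℝ) - 1) := fun r hr => by
    rw [← Real.rpow_natCast, Nat.cast_sub hd, Nat.cast_one]
  rw [← Set.Ioc_union_Ioi_eq_Ioi (zero_le_one' ℝ)]
  refine IntegrableOn.union ?_ ?_
  · have h : IntegrableOn (fun r : ℝ => r ^ (p - s * p - 1)) (Set.Ioc 0 1) :=
      (intervalIntegrable_iff_integrableOn_Ioc_of_le zero_le_one).1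
        (intervalIntegral.intervalIntegrable_rpow' (by nlinarith))
    refine h.congr_fun (fun r hr => ?_) measurableSet_Ioc
    simp only [smul_eq_mul]
    rw [min_eq_right hr.2, hpow r hr.1, ← Real.rpow_sub hr.1, ← Real.rpow_add hr.1]
    congr 1
    ring
  · have h : IntegrableOn (fun r : ℝ => r ^ (-1 - s * p)) (Set.Ioi 1) :=
      integrableOn_Ioi_rpow_of_lt (by nlinarith [mul_pos hs0 hp]) zero_lt_one
    refine h.congr_fun (fun r hr => ?_) measurableSet_Ioi
    have hr0 : (0 : ℝ) < r := zero_lt_one.trans hr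
    simp only [smul_eq_mul]
    rw [min_eq_left (le_of_lt hr), hpow r hr0, Real.one_rpow, one_div, ← Real.rpow_neg hr0.le,
      ← Real.rpow_add hr0]
    congr 1
    ring

theorem measureReal_closedBall_diff_closedBall_le {R S : ℝ} (hS : 0 < S) (hSR : S < R) :
    μ.real (Metric.closedBall (0 : E) (R + S) \ Metric.closedBall 0 (R - S))
      ≤ 2 * S * Module.finrank ℝ E * (2 * R) ^ (Module.finrank ℝ E - 1)
        * μ.real (Metric.ball (0 : E) 1) := by
  rw [measureReal_sdiff (Metric.closedBall_subset_closedBall (by linarith))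
      measurableSet_closedBall measure_closedBall_lt_top.ne,
    Measure.addHaar_real_closedBall _ _ (by linarith),
    Measure.addHaar_real_closedBall _ _ (by linarith), ← sub_mul]
  gcongr
  refine (le_abs_self _).trans ((abs_pow_sub_pow_le _ _ _).trans ?_)
  rw [abs_of_pos (by linarith : 0 < R + S), abs_of_pos (by linarith : 0 < R - S),
    max_eq_left (by linarith), abs_of_pos (by linarith)]
  have h1 : R + S - (R - S) = 2 * S := by ring
  rw [h1]
  have h2 : R + S ≤ 2 * R := by linarith
  have h3 : 0 ≤ R + S := by linarith
  gcongr

end Normed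

theorem exists_pos_abs_sub_le_mul_min_of_hasCompactSupport {η : ℝ → ℝ} (hη : ContDiff ℝ 1 η)
    (hηc : HasCompactSupport η) :
    ∃ M > 0, ∀ a b, |η a - η b| ≤ M * min 1 |a - b| := by
  obtain ⟨L, hL⟩ := hη.lipschitzWith_of_hasCompactSupport hηc one_ne_zero
  obtain ⟨B, hB⟩ := hηc.exists_bound_of_continuous hη.continuous
  have hB0 : 0 ≤ B := (norm_nonneg _).trans (hB 0)
  refine ⟨L + 2 * B + 1, by positivity, fun a b => ?_⟩
  have h1 : |η a - η b| ≤ L * |a - b| := hL.dist_le_mul a b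
  have h2 : |η a - η b| ≤ 2 * B := by
    have ha := hB a
    have hb := hB b
    rw [Real.norm_eq_abs] at ha hb
    linarith [abs_sub (η a) (η b)]
  have hL0 : (0 : ℝ) ≤ L := L.2
  rcases min_cases 1 |a - b| with ⟨h, -⟩ | ⟨h, -⟩ <;> rw [h]
  · linarith
  · nlinarith [abs_nonneg (a - b)]

theorem stmt18 (d : ℕ) (hd : 1 ≤ d) (s p : ℝ)
    (hs0 : 0 < s) (hs1 : s < 1) (hp1 : 1 ≤ p)
    (η : ℝ → ℝ) (hη : ContDiff ℝ (⊤ : ℕ∞) η) (hηc : HasCompactSupport η)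
    (hηsupp : tsupport η ⊆ Set.Ioo (-1 : ℝ) 1) (hη0 : 0 ∉ tsupport η)
    (hηnonneg : ∀ t, 0 ≤ η t) :
    ∃ C > 0, ∀ l R S : ℝ, 0 < l → 0 < S → S < R →
      (∫ x : EuclideanSpace ℝ (Fin d), ∫ y : EuclideanSpace ℝ (Fin d),
          |l * η ((‖x‖ - R) / S) - l * η ((‖y‖ - R) / S)| ^ p /
            ‖x - y‖ ^ ((d : ℝ) + s * p)) ≤
        C * l ^ p * R ^ ((d : ℝ) - 1) * S ^ (1 - s * p) := by
  have : Nonempty (Fin d) := ⟨⟨0, hd⟩⟩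
  have hp0 : 0 < p := by linarith
  obtain ⟨M, hM, hηM⟩ := exists_pos_abs_sub_le_mul_min_of_hasCompactSupport
    (hη.of_le (by exact_mod_cast le_top)) hηc
  set k : EuclideanSpace ℝ (Fin d) → ℝ :=
    fun z => min 1 ‖z‖ ^ p / ‖z‖ ^ ((d : ℝ) + s * p) with hk
  have hkint : Integrable k := by
    simpa using integrable_min_one_norm_rpow_div
      (volume : Measure (EuclideanSpace ℝ (Fin d))) hp0 hs0 hs1
  have hk0 : ∀ z, 0 ≤ k z := fun z => by positivity
  have hI0 : 0 ≤ ∫ z, k z := integral_nonneg hk0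
  set c := (volume : Measure (EuclideanSpace ℝ (Fin d))).real (Metric.ball 0 1) with hc
  have hc0 : 0 ≤ c := measureReal_nonneg
  refine ⟨4 * d * 2 ^ (d - 1) * c * M ^ p * (∫ z, k z) + 1, by positivity,
    fun l R S hl hS hSR => ?_⟩
  have hR : 0 < R := hS.trans hSR
  set A : Set (EuclideanSpace ℝ (Fin d)) :=
    Metric.closedBall 0 (R + S) \ Metric.closedBall 0 (R - S) with hA
  have hAmeas : MeasurableSet A := measurableSet_closedBall.diff measurableSet_closedBall
  have hAfin : volume A ≠ ⊤ :=
    ((measure_mono Set.sdiff_subset).trans_lt measure_closedBall_lt_top).ne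
  have hAvol : volume.real A ≤ 2 * S * d * (2 * R) ^ (d - 1) * c := by
    simpa using measureReal_closedBall_diff_closedBall_le
      (volume : Measure (EuclideanSpace ℝ (Fin d))) hS hSR
  have hvanish : ∀ x, x ∉ A → η ((‖x‖ - R) / S) = 0 := fun x hx => by
    by_contra h
    have hmem := hηsupp (subset_tsupport η h)
    rw [Set.mem_Ioo, lt_div_iff₀ hS, div_lt_iff₀ hS] at hmem
    refine hx ⟨?_, ?_⟩
    · rw [mem_closedBall_zero_iff]
      linarith [hmem.2]
    · rw [mem_closedBall_zero_iff]
      linarith [hmem.1]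
  set K : EuclideanSpace ℝ (Fin d) → ℝ :=
    fun z => (l ^ p * M ^ p * S ^ (-((d : ℝ) + s * p))) * k (S⁻¹ • z) with hK
  have hKint : Integrable K := (hkint.comp_smul (inv_ne_zero hS.ne')).const_mul _
  have hKval : ∫ z, K z = l ^ p * M ^ p * S ^ (-(s * p)) * ∫ z, k z := by
    rw [hK, integral_const_mul, Measure.integral_comp_inv_smul_of_nonneg _ _ hS.le,
      finrank_euclideanSpace_fin, smul_eq_mul, ← Real.rpow_natCast S d]
    have h : S ^ (-((d : ℝ) + s * p)) * S ^ (d : ℝ) = S ^ (-(s * p)) := by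
      rw [← Real.rpow_add hS]
      congr 1
      ring
    rw [← h]
    ring
  have hK0 : ∀ z, 0 ≤ K z := fun z => mul_nonneg (by positivity) (hk0 _)
  have hFK : ∀ x y : EuclideanSpace ℝ (Fin d),
      |l * η ((‖x‖ - R) / S) - l * η ((‖y‖ - R) / S)| ^ p / ‖x - y‖ ^ ((d : ℝ) + s * p)
        ≤ K (x - y) := fun x y => by
    have hdiff : |(‖x‖ - R) / S - (‖y‖ - R) / S| ≤ S⁻¹ * ‖x - y‖ := by
      rw [← sub_div, abs_div, abs_of_pos hS, div_eq_inv_mul, sub_sub_sub_cancel_right]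
      gcongr
      exact abs_norm_sub_norm_le x y
    have hnum : |l * η ((‖x‖ - R) / S) - l * η ((‖y‖ - R) / S)|
        ≤ l * (M * min 1 (S⁻¹ * ‖x - y‖)) := by
      rw [← mul_sub, abs_mul, abs_of_pos hl]
      gcongr
      exact (hηM _ _).trans (by gcongr)
    have hmin : 0 ≤ min 1 (S⁻¹ * ‖x - y‖) := by positivity
    have hnorm : ‖S⁻¹ • (x - y)‖ = S⁻¹ * ‖x - y‖ := by
      rw [norm_smul, norm_inv, Real.norm_of_nonneg hS.le]
    calc _ ≤ (l * (M * min 1 (S⁻¹ * ‖x - y‖))) ^ p / ‖x - y‖ ^ ((d : ℝ) + s * p) := by gcongr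
      _ = K (x - y) := by
        have hSq : 0 < S ^ ((d : ℝ) + s * p) := Real.rpow_pos_of_pos hS _
        simp only [hK, hk, hnorm]
        rw [Real.mul_rpow hl.le (by positivity), Real.mul_rpow hM.le hmin,
          Real.mul_rpow (inv_nonneg.2 hS.le) (norm_nonneg _), Real.inv_rpow hS.le,
          Real.rpow_neg hS.le, ← div_div, div_inv_eq_mul]
        field_simp
  have hmain := integral_integral_le_of_le_indicator_add (μ := volume)
    (F := fun x y : EuclideanSpace ℝ (Fin d) =>
      |l * η ((‖x‖ - R) / S) - l * η ((‖y‖ - R) / S)| ^ p / ‖x - y‖ ^ ((d : ℝ) + s * p))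
    hAmeas hAfin hKint (fun x y => by positivity) (fun x y => by
      by_cases hx : x ∈ A
      · refine (hFK x y).trans (le_mul_of_one_le_left (hK0 _) ?_)
        rw [Set.indicator_of_mem hx]
        exact le_add_of_nonneg_right (Set.indicator_nonneg (fun _ _ => zero_le_one) y)
      · by_cases hy : y ∈ A
        · refine (hFK x y).trans (le_mul_of_one_le_left (hK0 _) ?_)
          simp [hx, hy]
        · simp [hvanish x hx, hvanish y hy, hx, hy, Real.zero_rpow hp0.ne'])
  refine hmain.trans ?_
  have hSpow : S ^ (1 - s * p) = S * S ^ (-(s * p)) := by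
    rw [sub_eq_add_neg, Real.rpow_add hS, Real.rpow_one]
  have hRpow : R ^ ((d : ℝ) - 1) = R ^ (d - 1) := by
    rw [← Real.rpow_natCast, Nat.cast_sub hd, Nat.cast_one]
  calc 2 * volume.real A * ∫ z, K z
      ≤ 2 * (2 * S * d * (2 * R) ^ (d - 1) * c) * ∫ z, K z := by
        gcongr
    _ = (4 * d * 2 ^ (d - 1) * c * M ^ p * ∫ z, k z) * l ^ p * R ^ ((d : ℝ) - 1)
          * S ^ (1 - s * p) := by
        rw [hKval, hSpow, hRpow, mul_pow]
        ring
    _ ≤ _ := by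
        gcongr
        linarith
end
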